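/- arXiv:math/9904118 — 2 statements merged into one kernel-verified Lean document; each statement's English description precedes it below -/
import Mathlib

section
/- Let h be a CR function on M of class C¹ and let Γ ⊆ ℝᵈ be an open convex cone. Suppose h extends continuously to a holomorphic function in the wedge W_Γ and also extends continuously to a holomorphic function in the wedge W_{−Γ}. Then h extends holomorphically to a full neighborhood of the origin: there exist a neighborhood U of 0 in ℂᴺ and a holomorphic function G : U → ℂ with G(ι(z,s)) = h(z,s) for all (z,s) near 0. -/
open Complex Topology Filter

noncomputable section

/-- The local model for the generic submanifold `M`: a neighborhood of `0` in `ℂⁿ × ℝᵈ`. -/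
abbrev Dom (n d : ℕ) : Type := (Fin n → ℂ) × (Fin d → ℝ)

/-- The ambient space `ℂᴺ = ℂⁿ × ℂᵈ`. -/
abbrev Amb (n d : ℕ) : Type := (Fin n → ℂ) × (Fin d → ℂ)

/-- The Wirtinger derivative `∂/∂z̄ⱼ` of a function on `ℂⁿ × ℝᵈ`. -/
def dzbar {n d : ℕ} (j : Fin n) (f : Dom n d → ℂ) (p : Dom n d) : ℂ :=
  (1 / 2 : ℂ) * (fderiv ℝ f p (Pi.single j 1, 0) +
    Complex.I * fderiv ℝ f p (Pi.single j Complex.I, 0))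

/-- The derivative `∂/∂sₖ` of a function on `ℂⁿ × ℝᵈ`. -/
def dS {n d : ℕ} (k : Fin d) (f : Dom n d → ℂ) (p : Dom n d) : ℂ :=
  fderiv ℝ f p (0, Pi.single k 1)

/-- The matrix `I_d + i φ_s`. -/
def phiMat {n d : ℕ} (φ : Dom n d → Fin d → ℝ) (p : Dom n d) :
    Matrix (Fin d) (Fin d) ℂ := fun k l =>
  (if k = l then 1 else 0) + Complex.I * ((fderiv ℝ φ p (0, Pi.single l 1)) k : ℂ)

/-- The CR vector field `Λⱼ = ∂/∂z̄ⱼ − i (φ_{z̄ⱼ})ᵀ (I_d + iφ_s)⁻¹ ∂/∂s` of `M`. -/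
def Lambda {n d : ℕ} (φ : Dom n d → Fin d → ℝ) (j : Fin n) (f : Dom n d → ℂ)
    (p : Dom n d) : ℂ :=
  dzbar j f p - Complex.I *
    ∑ l, (∑ k, dzbar j (fun q => ((φ q k : ℝ) : ℂ)) p * (phiMat φ p)⁻¹ k l) * dS l f p

/-- `Λ^α = Λ₁^{α₁} ⋯ Λₙ^{αₙ}`. -/
def LambdaPow {n d : ℕ} (φ : Dom n d → Fin d → ℝ) (α : Fin n → ℕ)
    (f : Dom n d → ℂ) : Dom n d → ℂ :=
  (((List.finRange n).map fun j => (Lambda φ j)^[α j]).foldr (· ∘ ·) id) f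

/-- The Wirtinger (complex) gradient component `∂r/∂Z'ₘ` of a real-valued function on `ℂ^{N'}`. -/
def gradZ {N' : ℕ} (m : Fin N') (r : (Fin N' → ℂ) → ℝ) (Z : Fin N' → ℂ) : ℂ :=
  (1 / 2 : ℂ) * ((fderiv ℝ r Z (Pi.single m 1) : ℂ) -
    Complex.I * (fderiv ℝ r Z (Pi.single m Complex.I) : ℂ))

/-- The space `E_k(0)` spanned by the vectors `Λ^α (ρ'_{l Z'}(H, H̄))(0)`, `|α| ≤ k`. -/
def Ek {n d N' d' : ℕ} (φ : Dom n d → Fin d → ℝ) (ρ : Fin d' → (Fin N' → ℂ) → ℝ)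
    (H : Dom n d → Fin N' → ℂ) (k : ℕ) : Submodule ℂ (Fin N' → ℂ) :=
  Submodule.span ℂ { v | ∃ (α : Fin n → ℕ) (l : Fin d'), (∑ j, α j) ≤ k ∧
    v = fun m => LambdaPow φ α (fun p => gradZ m (ρ l) (H p)) 0 }

/-- The identification `ι(z,s) = (z, s + iφ(z,z̄,s))` of `ℂⁿ × ℝᵈ` with `M ⊆ ℂᴺ`. -/
def iotaM {n d : ℕ} (φ : Dom n d → Fin d → ℝ) (p : Dom n d) : Amb n d :=
  (p.1, fun k => (p.2 k : ℂ) + Complex.I * ((φ p k : ℝ) : ℂ))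

/-- The map `Ψ(z,s,t) = (z, s + it + iφ̂(z,z̄,s+it))`. -/
def PsiW {n d : ℕ} (φhat : Amb n d → Fin d → ℂ)
    (q : (Fin n → ℂ) × (Fin d → ℝ) × (Fin d → ℝ)) : Amb n d :=
  (q.1, fun k => (q.2.1 k : ℂ) + Complex.I * (q.2.2 k : ℂ) +
    Complex.I * φhat (q.1, fun k' => (q.2.1 k' : ℂ) + Complex.I * (q.2.2 k' : ℂ)) k)

/-- The wedge `W_Γ^ε` in the coordinates `(z,s,t)`. -/
def WedgeSet {n d : ℕ} (Γ : Set (Fin d → ℝ)) (ε : ℝ) :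
    Set ((Fin n → ℂ) × (Fin d → ℝ) × (Fin d → ℝ)) :=
  {q | ‖q.1‖ < ε ∧ ‖q.2.1‖ < ε ∧ ‖q.2.2‖ < ε ∧ q.2.2 ∈ Γ}

/-- `h` extends continuously to a holomorphic function in the wedge `W_Γ`. -/
def ExtendsToWedge {n d : ℕ} (φ : Dom n d → Fin d → ℝ) (φhat : Amb n d → Fin d → ℂ)
    (Γ : Set (Fin d → ℝ)) (h : Dom n d → ℂ) : Prop :=
  ∃ ε > (0 : ℝ), ∃ F : Amb n d → ℂ,
    DifferentiableOn ℂ F (PsiW φhat '' WedgeSet Γ ε) ∧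
    ContinuousOn F (PsiW φhat '' WedgeSet Γ ε ∪
      iotaM φ '' {p : Dom n d | ‖p.1‖ < ε ∧ ‖p.2‖ < ε}) ∧
    ∀ p : Dom n d, ‖p.1‖ < ε → ‖p.2‖ < ε → F (iotaM φ p) = h p


theorem eow_integral_hol {E : Type*} [NormedAddCommGroup E] [NormedSpace ℂ E]
    [FiniteDimensional ℂ E] {α : Type*} [MeasurableSpace α] {μ : MeasureTheory.Measure α}
    {f : E → α → ℂ} {U : Set E} (hU : IsOpen U) {g : α → ℝ}
    (hmeas : ∀ x ∈ U, MeasureTheory.AEStronglyMeasurable (f x) μ)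
    (hdiff : ∀ᵐ a ∂μ, DifferentiableOn ℂ (fun x => f x a) U)
    (hg : MeasureTheory.Integrable g μ)
    (hbd : ∀ᵐ a ∂μ, ∀ x ∈ U, ‖f x a‖ ≤ g a) :
    DifferentiableOn ℂ (fun x => ∫ a, f x a ∂μ) U := by
  intro x0 hx0
  obtain ⟨r, hr, hrU⟩ := Metric.isOpen_iff.1 hU x0 hx0
  have hUat : ∀ x ∈ Metric.ball x0 (r/2), Metric.ball x (r/2) ⊆ U := by
    intro x hx y hy
    apply hrU
    have := dist_triangle y x x0
    simp only [Metric.mem_ball] at *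
    linarith
  have key : HasFDerivAt (fun x => ∫ a, f x a ∂μ) (∫ a, fderiv ℂ (fun x => f x a) x0 ∂μ) x0 := by
    refine hasFDerivAt_integral_of_dominated_of_fderiv_le (𝕜 := ℂ)
      (bound := fun a => g a / (r/4)) (F' := fun x a => fderiv ℂ (fun x => f x a) x)
      (Metric.ball_mem_nhds x0 (half_pos hr)) ?_ ?_ ?_ ?_ ?_ ?_
    · filter_upwards [hU.mem_nhds hx0] with x hx using hmeas x hx
    · refine hg.mono' (hmeas x0 hx0) ?_
      filter_upwards [hbd] with a ha using ha x0 hx0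
    · let b := Module.finBasis ℂ E
      have h1 : ∀ v : E, MeasureTheory.AEStronglyMeasurable
          (fun a => fderiv ℂ (fun x => f x a) x0 v) μ := by
        intro v
        have hlim : Tendsto (fun n : ℕ => x0 + ((n:ℂ)+1)⁻¹ • v) atTop (𝓝 x0) := by
          have h0 : Tendsto (fun n : ℕ => ((n:ℂ)+1)⁻¹) atTop (𝓝 0) := by
            have := tendsto_one_div_add_atTop_nhds_zero_nat (𝕜 := ℂ)
            simpa using this
          simpa using (tendsto_const_nhds (x := x0)).add (h0.smul_const v)
        obtain ⟨N, hN⟩ := eventually_atTop.1 (hlim.eventually (hU.mem_nhds hx0))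
        refine aestronglyMeasurable_of_tendsto_ae (u := atTop)
          (f := fun (n : ℕ) a => (((n+N : ℕ):ℂ)+1) • (f (x0 + (((n+N : ℕ):ℂ)+1)⁻¹ • v) a - f x0 a)) ?_ ?_
        · intro n
          exact ((hmeas _ (hN (n+N) (by omega))).sub (hmeas _ hx0)).const_smul (((n+N : ℕ):ℂ)+1)
        · filter_upwards [hdiff] with a ha
          have hd : HasFDerivAt (fun x => f x a) (fderiv ℂ (fun x => f x a) x0) x0 :=
            (ha.differentiableAt (hU.mem_nhds hx0)).hasFDerivAt
          have h2 := hd.lim (l := atTop) (v := v) (c := fun n : ℕ => (((n+N : ℕ):ℂ)+1))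
            ?_
          · refine h2.congr fun n => ?_
            simp
          · have : Tendsto (fun n : ℕ => ((n + N : ℕ) : ℝ) + 1) atTop atTop :=
              tendsto_atTop_add_const_right _ _
                (tendsto_natCast_atTop_atTop.comp (tendsto_add_atTop_nat N))
            refine this.congr fun n => ?_
            have : (((n+N : ℕ):ℂ)+1) = ((((n+N : ℕ):ℝ)+1 : ℝ) : ℂ) := by push_cast; ring
            rw [this, Complex.norm_real, Real.norm_of_nonneg (by positivity)]
      have h2 : (fun a => fderiv ℂ (fun x => f x a) x0) = fun a => ∑ i,
          (fderiv ℂ (fun x => f x a) x0 (b i)) • (LinearMap.toContinuousLinearMap (b.coord i)) := by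
        funext a
        ext v
        conv_lhs => rw [← b.sum_repr v, map_sum]
        simp [mul_comm]
      rw [h2]
      refine Finset.aestronglyMeasurable_fun_sum _ fun i _ => ?_
      exact (h1 (b i)).smul_const _
    · filter_upwards [hdiff, hbd] with a ha hb x hx
      have hxU := hUat x hx
      have hga : 0 ≤ g a := (norm_nonneg _).trans (hb x0 hx0)
      refine ContinuousLinearMap.opNorm_le_bound _ (by positivity) fun v => ?_
      by_cases hv : v = 0
      · simp [hv]
      have hvn : 0 < ‖v‖ := norm_pos_iff.2 hv
      have hmaps : ∀ ζ : ℂ, ζ ∈ Metric.closedBall (0:ℂ) (r/4/‖v‖) → x + ζ • v ∈ U := by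
        intro ζ hζ
        apply hxU
        rw [mem_closedBall_zero_iff] at hζ
        rw [Metric.mem_ball, dist_eq_norm, add_sub_cancel_left, norm_smul]
        rw [le_div_iff₀ hvn] at hζ
        linarith
      have hdl : ∀ ζ : ℂ, HasDerivAt (fun ζ : ℂ => x + ζ • v) v ζ := by
        intro ζ
        simpa using ((hasDerivAt_id ζ).smul_const v).const_add x
      have hk : DifferentiableOn ℂ (fun ζ : ℂ => f (x + ζ • v) a)
          (Metric.closedBall (0:ℂ) (r/4/‖v‖)) := by
        intro ζ hζ
        have := (ha.differentiableAt (hU.mem_nhds (hmaps ζ hζ)))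
        exact (DifferentiableAt.comp ζ this (hdl ζ).differentiableAt).differentiableWithinAt
      have hb2 := Complex.norm_deriv_le_of_forall_mem_sphere_norm_le (c := 0) (R := r/4/‖v‖)
        (C := g a) (f := fun ζ : ℂ => f (x + ζ • v) a) (by positivity)
        ((hk.mono Metric.closure_ball_subset_closedBall).diffContOnCl)
        (fun z hz => hb _ (hmaps z (Metric.sphere_subset_closedBall hz)))
      have hfd : HasDerivAt (fun ζ : ℂ => f (x + ζ • v) a) (fderiv ℂ (fun x => f x a) x v) 0 := by
        have h3 : HasFDerivAt (fun x => f x a) (fderiv ℂ (fun x => f x a) x) (x + (0:ℂ) • v) := by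
          simpa using (ha.differentiableAt (hU.mem_nhds (hxU (Metric.mem_ball_self (half_pos hr))))).hasFDerivAt
        exact h3.comp_hasDerivAt (0:ℂ) (hdl 0)
      rw [hfd.deriv] at hb2
      refine hb2.trans (le_of_eq ?_)
      field_simp
    · exact hg.div_const _
    · filter_upwards [hdiff] with a ha x hx
      exact (ha.differentiableAt (hU.mem_nhds (hUat x hx (Metric.mem_ball_self (half_pos hr))))).hasFDerivAt
  exact key.differentiableAt.differentiableWithinAt

theorem eow_painleve {u : ℂ → ℂ} {U : Set ℂ} (hU : IsOpen U) (hc : ContinuousOn u U)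
    (hd : ∀ z ∈ U, z.im ≠ 0 → DifferentiableAt ℂ u z) : DifferentiableOn ℂ u U := by
  rw [← Complex.isConservativeOn_and_continuousOn_iff_isDifferentiableOn hU]
  refine ⟨?_, hc⟩
  have key : ∀ z w : ℂ, z.Rectangle w ⊆ U → (0:ℝ) ∉ Set.Ioo (min z.im w.im) (max z.im w.im) →
      (((∫ (x : ℝ) in z.re..w.re, u (↑x + ↑z.im * I)) - ∫ (x : ℝ) in z.re..w.re, u (↑x + ↑w.im * I)) +
        I • ∫ (y : ℝ) in z.im..w.im, u (↑w.re + ↑y * I)) -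
      I • ∫ (y : ℝ) in z.im..w.im, u (↑z.re + ↑y * I) = 0 := by
    intro z w hzw h0
    apply Complex.integral_boundary_rect_eq_zero_of_continuousOn_of_differentiableOn
    · exact hc.mono hzw
    · intro x hx
      rw [Complex.mem_reProdIm] at hx
      refine (hd x (hzw ?_) ?_).differentiableWithinAt
      · rw [Complex.Rectangle, Complex.mem_reProdIm]
        exact ⟨Set.Ioo_subset_Icc_self hx.1, Set.Ioo_subset_Icc_self hx.2⟩
      · intro h
        rw [h] at hx
        exact h0 hx.2
  intro z w hzw
  rw [← add_eq_zero_iff_eq_neg, Complex.wedgeIntegral_add_wedgeIntegral_eq]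
  by_cases h0 : (0:ℝ) ∈ Set.Ioo (min z.im w.im) (max z.im w.im)
  swap
  · exact key z w hzw h0
  have h0' : (0:ℝ) ∈ Set.uIcc z.im w.im := Set.Ioo_subset_Icc_self h0
  have s1 : Set.uIcc z.im 0 ⊆ Set.uIcc z.im w.im := Set.uIcc_subset_uIcc_left h0'
  have s2 : Set.uIcc 0 w.im ⊆ Set.uIcc z.im w.im := Set.uIcc_subset_uIcc_right h0'
  have k1 := key z ⟨w.re, 0⟩ (fun x hx => hzw (by
    rw [Complex.Rectangle, Complex.mem_reProdIm] at hx ⊢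
    exact ⟨hx.1, s1 hx.2⟩)) (by
      simp only [Set.mem_Ioo]
      rintro ⟨ha, hb⟩
      rcases le_total z.im 0 with h | h <;> simp [h] at ha hb)
  have k2 := key ⟨z.re, 0⟩ w (fun x hx => hzw (by
    rw [Complex.Rectangle, Complex.mem_reProdIm] at hx ⊢
    exact ⟨hx.1, s2 hx.2⟩)) (by
      simp only [Set.mem_Ioo]
      rintro ⟨ha, hb⟩
      rcases le_total w.im 0 with h | h <;> simp [h] at ha hb)
  have hInt : ∀ a ∈ Set.uIcc z.re w.re, ContinuousOn (fun y : ℝ => u (↑a + ↑y * I))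
      (Set.uIcc z.im w.im) := by
    intro a ha
    refine hc.comp (by fun_prop) ?_
    intro y hy
    apply hzw
    rw [Complex.Rectangle, Complex.mem_reProdIm]
    simpa using ⟨ha, hy⟩
  have hadd : ∀ a ∈ Set.uIcc z.re w.re, ∫ (y : ℝ) in z.im..w.im, u (↑a + ↑y * I) =
      (∫ (y : ℝ) in z.im..0, u (↑a + ↑y * I)) + ∫ (y : ℝ) in 0..w.im, u (↑a + ↑y * I) := by
    intro a ha
    rw [intervalIntegral.integral_add_adjacent_intervals]
    · exact ((hInt a ha).mono s1).intervalIntegrable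
    · exact ((hInt a ha).mono s2).intervalIntegrable
  rw [hadd _ Set.left_mem_uIcc, hadd _ Set.right_mem_uIcc]
  simp only [smul_eq_mul] at k1 k2 ⊢
  linear_combination k1 + k2

noncomputable def eowRud (w l : ℂ) : ℂ := (w + 2 * l) / (1 + l * w / 2)

theorem eowRud_den {w l : ℂ} (hw : ‖w‖ < 1) (hl : ‖l‖ ≤ 1) : 1 / 2 < ‖1 + l * w / 2‖ := by
  have h1 : ‖l * w / 2‖ < 1 / 2 := by
    rw [norm_div, norm_mul]
    have : ‖l‖ * ‖w‖ < 1 := by nlinarith [norm_nonneg w, norm_nonneg l]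
    simp only [Complex.norm_ofNat]
    linarith
  have h2 := norm_sub_norm_le (1:ℂ) (-(l * w / 2))
  rw [norm_neg, sub_neg_eq_add, norm_one] at h2
  linarith

theorem eowRud_den_ne {w l : ℂ} (hw : ‖w‖ < 1) (hl : ‖l‖ ≤ 1) : 1 + l * w / 2 ≠ 0 := by
  have := eowRud_den hw hl
  intro h
  rw [h, norm_zero] at this
  linarith

theorem eowRud_norm {w l : ℂ} (hw : ‖w‖ < 1) (hl : ‖l‖ ≤ 1) : ‖eowRud w l‖ < 6 := by
  have h1 := eowRud_den hw hl
  rw [eowRud, norm_div, div_lt_iff₀ (by linarith)]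
  have h2 := norm_add_le w (2 * l)
  rw [norm_mul, Complex.norm_ofNat] at h2
  linarith

theorem eowRud_im {w l : ℂ} (hw : ‖w‖ < 1) (hl : ‖l‖ ≤ 1) (h : ‖l‖ = 1 ∨ w.im = 0) :
    ∃ k : ℝ, 0 < k ∧ (eowRud w l).im = k * l.im := by
  have h1 := eowRud_den_ne hw hl
  have h2 : 0 < Complex.normSq (1 + l * w / 2) := Complex.normSq_pos.2 h1
  have h3 : w.re ^ 2 + w.im ^ 2 < 1 := by
    have := Complex.sq_norm w
    rw [Complex.normSq_apply] at this
    nlinarith [norm_nonneg w]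
  refine ⟨(2 - (w.re ^ 2 + w.im ^ 2) / 2) / Complex.normSq (1 + l * w / 2), ?_, ?_⟩
  · apply div_pos _ h2
    linarith
  · rw [eowRud, Complex.div_im, ← sub_div, div_mul_eq_mul_div]
    congr 1
    have h4 : w.im * (1 - (l.re ^ 2 + l.im ^ 2)) = 0 := by
      rcases h with h | h
      · have := Complex.sq_norm l
        rw [Complex.normSq_apply, h] at this
        rw [show l.re ^ 2 + l.im ^ 2 = 1 by linarith]
        ring
      · rw [h]; ring
    simp
    linear_combination h4

theorem eow_flat {d : ℕ} (hd : 1 ≤ d) {f : (Fin d → ℂ) → ℂ} {B : ℝ}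
    (hc : ContinuousOn f {w | ‖w‖ < 6 ∧
      ((∀ j, 0 < (w j).im) ∨ (∀ j, (w j).im < 0) ∨ ∀ j, (w j).im = 0)})
    (hp : DifferentiableOn ℂ f {w | ‖w‖ < 6 ∧ ∀ j, 0 < (w j).im})
    (hm : DifferentiableOn ℂ f {w | ‖w‖ < 6 ∧ ∀ j, (w j).im < 0})
    (hB : ∀ w : Fin d → ℂ, ‖w‖ < 6 →
      ((∀ j, 0 < (w j).im) ∨ (∀ j, (w j).im < 0) ∨ ∀ j, (w j).im = 0) → ‖f w‖ ≤ B) :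
    ∃ g : (Fin d → ℂ) → ℂ, DifferentiableOn ℂ g (Metric.ball 0 1) ∧
      (∀ w ∈ Metric.ball (0 : Fin d → ℂ) 1, ‖g w‖ ≤ B) ∧
      (∀ w ∈ Metric.ball (0 : Fin d → ℂ) 1, (∀ j, (w j).im = 0) → g w = f w) ∧
      (∀ w ∈ Metric.ball (0 : Fin d → ℂ) 1, (∀ j, 0 < (w j).im) → g w = f w) := by
  set S : Set (Fin d → ℂ) := {w | ‖w‖ < 6 ∧
      ((∀ j, 0 < (w j).im) ∨ (∀ j, (w j).im < 0) ∨ ∀ j, (w j).im = 0)} with hS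
  have j0 : Fin d := ⟨0, hd⟩
  have hop : IsOpen {w : Fin d → ℂ | ‖w‖ < 6 ∧ ∀ j, 0 < (w j).im} := by
    rw [Set.ofPred_and, Set.ofPred_forall]
    refine (isOpen_lt continuous_norm continuous_const).inter (isOpen_iInter_of_finite fun j => ?_)
    exact isOpen_lt continuous_const (by fun_prop)
  have hom : IsOpen {w : Fin d → ℂ | ‖w‖ < 6 ∧ ∀ j, (w j).im < 0} := by
    rw [Set.ofPred_and, Set.ofPred_forall]
    refine (isOpen_lt continuous_norm continuous_const).inter (isOpen_iInter_of_finite fun j => ?_)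
    exact isOpen_lt (by fun_prop) continuous_const
  let Φ : (Fin d → ℂ) → ℂ → (Fin d → ℂ) := fun w l j => eowRud (w j) l
  have hwj : ∀ {w : Fin d → ℂ}, w ∈ Metric.ball (0 : Fin d → ℂ) 1 → ∀ j, ‖w j‖ < 1 := by
    intro w hw j
    exact (norm_le_pi_norm w j).trans_lt (mem_ball_zero_iff.1 hw)
  have hΦn : ∀ {w : Fin d → ℂ} {l : ℂ}, w ∈ Metric.ball (0 : Fin d → ℂ) 1 → ‖l‖ ≤ 1 →
      ‖Φ w l‖ < 6 := by
    intro w l hw hl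
    rw [pi_norm_lt_iff (by norm_num)]
    exact fun j => eowRud_norm (hwj hw j) hl
  have hpos : ∀ {w : Fin d → ℂ} {l : ℂ}, w ∈ Metric.ball (0 : Fin d → ℂ) 1 → ‖l‖ ≤ 1 →
      (‖l‖ = 1 ∨ ∀ j, (w j).im = 0) → 0 < l.im → ∀ j, 0 < (Φ w l j).im := by
    intro w l hw hl h him j
    obtain ⟨k, hk, hk2⟩ := eowRud_im (hwj hw j) hl (h.imp id fun h => h j)
    show 0 < (eowRud (w j) l).im
    rw [hk2]; positivity
  have hneg : ∀ {w : Fin d → ℂ} {l : ℂ}, w ∈ Metric.ball (0 : Fin d → ℂ) 1 → ‖l‖ ≤ 1 →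
      (‖l‖ = 1 ∨ ∀ j, (w j).im = 0) → l.im < 0 → ∀ j, (Φ w l j).im < 0 := by
    intro w l hw hl h him j
    obtain ⟨k, hk, hk2⟩ := eowRud_im (hwj hw j) hl (h.imp id fun h => h j)
    show (eowRud (w j) l).im < 0
    rw [hk2]; exact mul_neg_of_pos_of_neg hk him
  have hzer : ∀ {w : Fin d → ℂ} {l : ℂ}, w ∈ Metric.ball (0 : Fin d → ℂ) 1 → ‖l‖ ≤ 1 →
      (‖l‖ = 1 ∨ ∀ j, (w j).im = 0) → l.im = 0 → ∀ j, (Φ w l j).im = 0 := by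
    intro w l hw hl h him j
    obtain ⟨k, hk, hk2⟩ := eowRud_im (hwj hw j) hl (h.imp id fun h => h j)
    show (eowRud (w j) l).im = 0
    rw [hk2, him, mul_zero]
  have hΦS : ∀ {w : Fin d → ℂ} {l : ℂ}, w ∈ Metric.ball (0 : Fin d → ℂ) 1 → ‖l‖ ≤ 1 →
      (‖l‖ = 1 ∨ ∀ j, (w j).im = 0) → Φ w l ∈ S := by
    intro w l hw hl h
    refine ⟨hΦn hw hl, ?_⟩
    rcases lt_trichotomy l.im 0 with h1 | h1 | h1
    · exact Or.inr (Or.inl (hneg hw hl h h1))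
    · exact Or.inr (Or.inr (hzer hw hl h h1))
    · exact Or.inl (hpos hw hl h h1)
  have hΦl : ∀ {w : Fin d → ℂ} {l : ℂ}, w ∈ Metric.ball (0 : Fin d → ℂ) 1 → ‖l‖ ≤ 1 →
      DifferentiableAt ℂ (fun l => Φ w l) l := by
    intro w l hw hl
    rw [differentiableAt_pi]
    intro j
    have h1 : DifferentiableAt ℂ (fun l => w j + 2 * l) l := by fun_prop
    have h2 : DifferentiableAt ℂ (fun l => 1 + l * w j / 2) l := by fun_prop
    exact h1.div h2 (eowRud_den_ne (hwj hw j) hl)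
  have hΦw : ∀ {l : ℂ}, ‖l‖ ≤ 1 →
      DifferentiableOn ℂ (fun w => Φ w l) (Metric.ball (0 : Fin d → ℂ) 1) := by
    intro l hl w hw
    apply DifferentiableAt.differentiableWithinAt
    rw [differentiableAt_pi]
    intro j
    have h1 : DifferentiableAt ℂ (fun x : ℂ => (x + 2 * l) / (1 + l * x / 2)) (w j) := by
      have h1 : DifferentiableAt ℂ (fun x : ℂ => x + 2 * l) (w j) := by fun_prop
      have h2 : DifferentiableAt ℂ (fun x : ℂ => 1 + l * x / 2) (w j) := by fun_prop
      exact h1.div h2 (eowRud_den_ne (hwj hw j) hl)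
    have h2 : DifferentiableAt ℂ (fun w : Fin d → ℂ => w j) w := differentiableAt_apply j w
    exact DifferentiableAt.comp (𝕜 := ℂ) (g := fun x : ℂ => (x + 2 * l) / (1 + l * x / 2)) w h1 h2
  have hcn : ∀ θ : ℝ, ‖circleMap 0 1 θ‖ = 1 := by intro θ; simp
  have hcim : ∀ θ : ℝ, (circleMap 0 1 θ).im = Real.sin θ := by
    intro θ
    simp [circleMap, Complex.exp_ofReal_mul_I_im]
  have hcurve : ∀ w ∈ Metric.ball (0 : Fin d → ℂ) 1,
      Continuous (fun θ : ℝ => f (Φ w (circleMap 0 1 θ))) := by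
    intro w hw
    rw [← continuousOn_univ]
    refine hc.comp (t := S) ?_ fun θ _ => hΦS hw (hcn θ).le (Or.inl (hcn θ))
    intro θ _
    have h1 := (hΦl hw (hcn θ).le).continuousAt
    exact (ContinuousAt.comp (f := circleMap 0 1) h1 (continuous_circleMap 0 1).continuousAt).continuousWithinAt
  have hgd : DifferentiableOn ℂ (fun w => Real.circleAverage (fun l => f (Φ w l)) 0 1)
      (Metric.ball 0 1) := by
    have : DifferentiableOn ℂ (fun w => ∫ θ in Set.Ioc 0 (2 * Real.pi), f (Φ w (circleMap 0 1 θ)))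
        (Metric.ball (0 : Fin d → ℂ) 1) := by
      refine eow_integral_hol Metric.isOpen_ball (g := fun _ => B) ?_ ?_ ?_ ?_
      · intro w hw
        exact (hcurve w hw).aestronglyMeasurable
      · have hcount : ({θ : ℝ | Real.sin θ = 0} : Set ℝ).Countable := by
          have : {θ : ℝ | Real.sin θ = 0} = Set.range (fun n : ℤ => (n : ℝ) * Real.pi) := by
            ext θ
            simp [Real.sin_eq_zero_iff]
          rw [this]
          exact Set.countable_range _
        have := hcount.ae_notMem (MeasureTheory.volume.restrict (Set.Ioc 0 (2 * Real.pi)))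
        filter_upwards [this] with θ hθ
        rcases lt_or_gt_of_ne hθ with h | h
        · refine hm.comp (hΦw (hcn θ).le) fun w hw => ?_
          exact ⟨hΦn hw (hcn θ).le, hneg hw (hcn θ).le (Or.inl (hcn θ)) (by rw [hcim]; exact h)⟩
        · refine hp.comp (hΦw (hcn θ).le) fun w hw => ?_
          exact ⟨hΦn hw (hcn θ).le, hpos hw (hcn θ).le (Or.inl (hcn θ)) (by rw [hcim]; exact h)⟩
      · exact MeasureTheory.integrable_const _
      · refine Eventually.of_forall fun θ w hw => ?_
        have := hΦS hw (hcn θ).le (Or.inl (hcn θ))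
        exact hB _ this.1 this.2
    have h2 := this.const_smul ((2 * Real.pi)⁻¹)
    refine h2.congr fun w hw => ?_
    simp only [Real.circleAverage_def]
    rw [intervalIntegral.integral_of_le (by positivity)]
    rfl
  have hreal : ∀ w ∈ Metric.ball (0 : Fin d → ℂ) 1, (∀ j, (w j).im = 0) →
      Real.circleAverage (fun l => f (Φ w l)) 0 1 = f w := by
    intro w hw him
    have hcont : ContinuousOn (fun l => f (Φ w l)) (Metric.closedBall 0 1) := by
      refine hc.comp (t := S) (fun l hl => ?_) fun l hl => ?_
      · exact (hΦl hw (mem_closedBall_zero_iff.1 hl)).continuousAt.continuousWithinAt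
      · exact hΦS hw (mem_closedBall_zero_iff.1 hl) (Or.inr him)
    have hdif : DifferentiableOn ℂ (fun l => f (Φ w l)) (Metric.ball 0 1) := by
      refine eow_painleve Metric.isOpen_ball (hcont.mono Metric.ball_subset_closedBall) ?_
      intro l hl him2
      have hl' : ‖l‖ ≤ 1 := (mem_ball_zero_iff.1 hl).le
      rcases lt_or_gt_of_ne him2 with h | h
      · have : DifferentiableAt ℂ f (Φ w l) := hm.differentiableAt
          (hom.mem_nhds ⟨hΦn hw hl', hneg hw hl' (Or.inr him) h⟩)
        exact this.comp l (hΦl hw hl')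
      · have : DifferentiableAt ℂ f (Φ w l) := hp.differentiableAt
          (hop.mem_nhds ⟨hΦn hw hl', hpos hw hl' (Or.inr him) h⟩)
        exact this.comp l (hΦl hw hl')
    rw [DiffContOnCl.circleAverage]
    · congr 1
      funext j
      simp [Φ, eowRud]
    · rw [abs_one]
      exact ⟨hdif, by rwa [closure_ball _ one_ne_zero]⟩
  refine ⟨_, hgd, ?_, hreal, ?_⟩
  · intro w hw
    rw [Real.circleAverage_def, norm_smul]
    have h1 : ‖∫ θ in (0:ℝ)..2 * Real.pi, f (Φ w (circleMap 0 1 θ))‖ ≤ B * |2 * Real.pi - 0| := by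
      apply intervalIntegral.norm_integral_le_of_norm_le_const
      intro θ _
      have := hΦS hw (hcn θ).le (Or.inl (hcn θ))
      exact hB _ this.1 this.2
    rw [sub_zero] at h1
    have hpi : 0 < 2 * Real.pi := by positivity
    rw [norm_inv, Real.norm_eq_abs, abs_of_pos hpi]
    rw [abs_of_pos hpi] at h1
    rw [inv_mul_le_iff₀ hpi]
    linarith
  · intro w hw him
    set g := fun w => Real.circleAverage (fun l => f (Φ w l)) 0 1 with hg
    let L : ℂ → (Fin d → ℂ) := fun ζ j => ((w j).re : ℂ) + ζ * ((w j).im : ℂ)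
    have hLc : Differentiable ℂ L := by
      rw [differentiable_pi]
      intro j
      show Differentiable ℂ (fun ζ : ℂ => ((w j).re : ℂ) + ζ * ((w j).im : ℂ))
      fun_prop
    have hLI : L I = w := by
      funext j
      apply Complex.ext <;> simp [L]
    have hLim : ∀ ζ j, (L ζ j).im = ζ.im * (w j).im := by intro ζ j; simp [L]
    let Ω : Set ℂ := L ⁻¹' Metric.ball 0 1
    have hΩo : IsOpen Ω := Metric.isOpen_ball.preimage hLc.continuous
    have hΩI : I ∈ Ω := by show L I ∈ Metric.ball 0 1; rwa [hLI]
    have hΩ0 : (0:ℂ) ∈ Ω := by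
      show L 0 ∈ Metric.ball 0 1
      rw [mem_ball_zero_iff, pi_norm_lt_iff (by norm_num)]
      intro j
      have := (Complex.abs_re_le_norm (w j)).trans_lt (hwj hw j)
      simpa [L] using this
    have hΩc : Convex ℝ Ω := by
      intro a ha b hb s t hs ht hst
      have : L (s • a + t • b) = s • L a + t • L b := by
        funext j
        have hst' : (s:ℂ) + t = 1 := by exact_mod_cast hst
        simp only [L, Pi.add_apply, Pi.smul_apply, Complex.real_smul]
        linear_combination -((w j).re : ℂ) * hst'
      show L (s • a + t • b) ∈ Metric.ball 0 1
      rw [this]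
      exact convex_ball (0 : Fin d → ℂ) 1 ha hb hs ht hst
    have hΩS : ∀ ζ ∈ Ω, L ζ ∈ S := by
      intro ζ hζ
      refine ⟨by have := mem_ball_zero_iff.1 hζ; linarith, ?_⟩
      rcases lt_trichotomy ζ.im 0 with h | h | h
      · exact Or.inr (Or.inl fun j => by rw [hLim]; exact mul_neg_of_neg_of_pos h (him j))
      · exact Or.inr (Or.inr fun j => by rw [hLim, h, zero_mul])
      · exact Or.inl fun j => by rw [hLim]; exact mul_pos h (him j)
    have hmc : ContinuousOn (fun ζ => f (L ζ) - g (L ζ)) Ω :=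
      (hc.comp hLc.continuous.continuousOn hΩS).sub
        (hgd.continuousOn.comp hLc.continuous.continuousOn fun ζ hζ => hζ)
    let u : ℂ → ℂ := fun ζ => if 0 ≤ ζ.im then f (L ζ) - g (L ζ) else 0
    have huc : ContinuousOn u Ω := by
      refine ContinuousOn.if ?_ ?_ continuousOn_const
      · rintro ζ ⟨hζ, hfr⟩
        have h0 : ζ.im = 0 := by
          have : frontier {a : ℂ | 0 ≤ a.im} ⊆ {a | 0 = a.im} :=
            frontier_le_subset_eq continuous_const Complex.continuous_im
          exact (this hfr).symm
        rw [hg]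
        show f (L ζ) - Real.circleAverage (fun l => f (Φ (L ζ) l)) 0 1 = 0
        rw [hreal (L ζ) hζ fun j => by rw [hLim, h0, zero_mul], sub_self]
      · exact hmc.mono Set.inter_subset_left
    have hud : DifferentiableOn ℂ u Ω := by
      refine eow_painleve hΩo huc ?_
      intro ζ hζ hne
      rcases lt_or_gt_of_ne hne with h | h
      · have : u =ᶠ[𝓝 ζ] fun _ => 0 := by
          filter_upwards [(isOpen_lt Complex.continuous_im continuous_const).mem_nhds h] with x hx
          have : ¬ (0 ≤ x.im) := not_le.2 hx
          simp [u, this]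
        exact this.differentiableAt_iff.2 (differentiableAt_const _)
      · have : u =ᶠ[𝓝 ζ] fun ζ => f (L ζ) - g (L ζ) := by
          filter_upwards [(isOpen_lt continuous_const Complex.continuous_im).mem_nhds h] with x hx
          have : 0 ≤ x.im := le_of_lt hx
          simp [u, this]
        refine this.differentiableAt_iff.2 ?_
        have h1 : DifferentiableAt ℂ f (L ζ) := hp.differentiableAt
          (hop.mem_nhds ⟨(hΩS ζ hζ).1, fun j => by rw [hLim]; exact mul_pos h (him j)⟩)
        have h2 : DifferentiableAt ℂ g (L ζ) := hgd.differentiableAt (Metric.isOpen_ball.mem_nhds hζ)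
        exact (h1.comp ζ (hLc ζ)).sub (h2.comp ζ (hLc ζ))
    have hfreq : ∃ᶠ ζ in 𝓝[≠] (0:ℂ), u ζ = 0 := by
      have ht : Tendsto (fun n : ℕ => -((n:ℂ)+1)⁻¹ * I) atTop (𝓝[≠] 0) := by
        rw [tendsto_nhdsWithin_iff]
        constructor
        · have := (tendsto_one_div_add_atTop_nhds_zero_nat (𝕜 := ℂ)).neg.mul_const I
          simpa using this
        · refine Eventually.of_forall fun n => ?_
          have : (n:ℂ) + 1 ≠ 0 := by exact_mod_cast Nat.succ_ne_zero n
          simp [this]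
      refine ht.frequently (Eventually.frequently (Eventually.of_forall fun n => ?_))
      have : (-((n:ℂ)+1)⁻¹ * I).im < 0 := by
        have : ((n:ℂ)+1)⁻¹ = ((((n:ℝ)+1)⁻¹ : ℝ) : ℂ) := by push_cast; ring
        rw [this, neg_mul, Complex.neg_im, Complex.im_ofReal_mul, Complex.I_im, mul_one]
        have : 0 < ((n:ℝ)+1)⁻¹ := by positivity
        linarith
      exact if_neg (not_le.2 this)
    have hz := (hud.analyticOnNhd hΩo).eqOn_zero_of_preconnected_of_frequently_eq_zero
      hΩc.isPreconnected hΩ0 hfreq hΩI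
    simp [u, hLI] at hz
    exact (sub_eq_zero.1 hz).symm

theorem eow_hartogs {X Y : Type*} [NormedAddCommGroup X] [NormedSpace ℂ X] [FiniteDimensional ℂ X]
    [NormedAddCommGroup Y] [NormedSpace ℂ Y] [FiniteDimensional ℂ Y]
    {G : X × Y → ℂ} {w0 : Y} {δ η B : ℝ} (hδ : 0 < δ) (hη : 0 < η)
    (h1 : ∀ z ∈ Metric.ball (0:X) η, DifferentiableOn ℂ (fun w => G (z, w)) (Metric.ball w0 (4 * δ)))
    (h2 : ∀ z ∈ Metric.ball (0:X) η, ∀ w ∈ Metric.ball w0 (4 * δ), ‖G (z, w)‖ ≤ B)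
    (h3 : DifferentiableOn ℂ G (Metric.ball (0:X) η ×ˢ Metric.ball w0 η)) :
    DifferentiableOn ℂ G (Metric.ball (0:X) η ×ˢ Metric.ball w0 δ) := by
  set V : Set (X × Y) := Metric.ball (0:X) η ×ˢ Metric.ball (0:Y) δ with hV
  have hVo : IsOpen V := Metric.isOpen_ball.prod Metric.isOpen_ball
  have hB : 0 ≤ B := (norm_nonneg _).trans
    (h2 0 (Metric.mem_ball_self hη) w0 (Metric.mem_ball_self (by positivity)))
  let τ : ℝ := min 1 (η / δ)
  have hτ : 0 < τ := lt_min one_pos (by positivity)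
  have hτ1 : τ ≤ 1 := min_le_left _ _
  have hτδ : τ * δ ≤ η := by
    have : τ ≤ η / δ := min_le_right _ _
    rwa [le_div_iff₀ hδ] at this
  have hlin : ∀ v : Y, Differentiable ℂ (fun ζ : ℂ => w0 + ζ • v) := by
    intro v
    exact (differentiable_id.smul_const v).const_add w0
  have hkd : ∀ p ∈ V, DifferentiableOn ℂ (fun ζ : ℂ => G (p.1, w0 + ζ • p.2)) (Metric.ball 0 4) := by
    intro p hp
    refine (h1 p.1 hp.1).comp (hlin p.2).differentiableOn fun ζ hζ => ?_
    have a1 := mem_ball_zero_iff.1 hζ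
    have a2 := mem_ball_zero_iff.1 hp.2
    rw [Metric.mem_ball, dist_eq_norm, add_sub_cancel_left, norm_smul]
    nlinarith [norm_nonneg ζ, norm_nonneg p.2]
  have hkb : ∀ p ∈ V, ∀ ζ : ℂ, ‖ζ‖ < 4 → ‖G (p.1, w0 + ζ • p.2)‖ ≤ B := by
    intro p hp ζ a1
    refine h2 p.1 hp.1 _ ?_
    have a2 := mem_ball_zero_iff.1 hp.2
    rw [Metric.mem_ball, dist_eq_norm, add_sub_cancel_left, norm_smul]
    nlinarith [norm_nonneg ζ, norm_nonneg p.2]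
  let c : X × Y → ℕ → ℂ := fun p k =>
    ((k.factorial : ℂ))⁻¹ * iteratedDeriv k (fun ζ : ℂ => G (p.1, w0 + ζ • p.2)) 0
  have hcsum : ∀ p ∈ V, HasSum (c p) (G (p.1, w0 + p.2)) := by
    intro p hp
    have := Complex.hasSum_taylorSeries_on_ball (hkd p hp) (z := 1) (by simp)
    simpa [c] using this
  have hcb : ∀ p ∈ V, ∀ k, ‖c p k‖ ≤ B * (1/2) ^ k := by
    intro p hp k
    have hsub : Metric.closedBall (0:ℂ) 2 ⊆ Metric.ball 0 4 :=
      Metric.closedBall_subset_ball (by norm_num)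
    have := Complex.norm_iteratedDeriv_le_of_forall_mem_sphere_norm_le (c := 0) (R := 2) (C := B)
      (f := fun ζ : ℂ => G (p.1, w0 + ζ • p.2)) k (by norm_num)
      (((hkd p hp).mono hsub).mono Metric.closure_ball_subset_closedBall).diffContOnCl
      (fun ζ hζ => hkb p hp ζ (by rw [mem_sphere_zero_iff_norm.1 hζ]; norm_num))
    have hk : (0:ℝ) < k.factorial := by exact_mod_cast k.factorial_pos
    rw [norm_mul, norm_inv, Complex.norm_natCast, inv_mul_le_iff₀ hk]
    refine this.trans (le_of_eq ?_)
    rw [one_div, inv_pow]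
    field_simp
  have hcd : ∀ k, DifferentiableOn ℂ (fun p => c p k) V := by
    intro k
    have hmap : ∀ ζ : ℂ, ‖ζ‖ = τ → ∀ p ∈ V,
        (p.1, w0 + ζ • p.2) ∈ Metric.ball (0:X) η ×ˢ Metric.ball w0 η := by
      intro ζ hζ p hp
      refine ⟨hp.1, ?_⟩
      have a2 := mem_ball_zero_iff.1 hp.2
      rw [Metric.mem_ball, dist_eq_norm, add_sub_cancel_left, norm_smul, hζ]
      nlinarith [norm_nonneg p.2]
    have hI : DifferentiableOn ℂ (fun p : X × Y => ∫ θ in Set.Ioc 0 (2 * Real.pi),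
        deriv (circleMap 0 τ) θ • ((1 / (circleMap 0 τ θ - 0) ^ (k+1)) •
          G (p.1, w0 + (circleMap 0 τ θ) • p.2))) V := by
      refine eow_integral_hol hVo (g := fun _ => τ * ((1 / τ ^ (k+1)) * B)) ?_ ?_ ?_ ?_
      · intro p hp
        apply Continuous.aestronglyMeasurable
        have hcm : Continuous (circleMap 0 τ) := continuous_circleMap 0 τ
        have hG : Continuous (fun θ : ℝ => G (p.1, w0 + (circleMap 0 τ θ) • p.2)) := by
          rw [← continuousOn_univ]
          refine h3.continuousOn.comp (Continuous.continuousOn (by fun_prop)) fun θ _ => ?_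
          exact hmap _ (by simp [abs_of_pos hτ]) p hp
        have hne : ∀ θ, (circleMap 0 τ θ - 0) ^ (k+1) ≠ 0 := by
          intro θ
          rw [sub_zero]
          exact pow_ne_zero _ (circleMap_ne_center hτ.ne')
        simp only [deriv_circleMap]
        have e1 : Continuous (fun θ : ℝ => circleMap 0 τ θ * I) := by fun_prop
        have e2 : Continuous (fun θ : ℝ => (circleMap 0 τ θ - 0) ^ (k+1)) := by fun_prop
        exact e1.smul ((continuous_const.div e2 hne).smul hG)
      · refine Eventually.of_forall fun θ => ?_
        refine DifferentiableOn.fun_const_smul (DifferentiableOn.fun_const_smul ?_ _) _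
        refine h3.comp (t := Metric.ball (0:X) η ×ˢ Metric.ball w0 η)
          (f := fun p : X × Y => (p.1, w0 + (circleMap 0 τ θ) • p.2)) ?_ ?_
        · apply Differentiable.differentiableOn
          exact differentiable_fst.prodMk ((differentiable_snd.const_smul _).const_add _)
        · exact fun p hp => hmap _ (by simp [abs_of_pos hτ]) p hp
      · exact MeasureTheory.integrable_const _
      · refine Eventually.of_forall fun θ p hp => ?_
        have hn : ‖circleMap 0 τ θ‖ = τ := by simp [abs_of_pos hτ]
        have := hkb p hp (circleMap 0 τ θ) (by rw [hn]; linarith)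
        rw [norm_smul, norm_smul, deriv_circleMap, norm_mul, hn, Complex.norm_I, mul_one, sub_zero,
          norm_div, norm_pow, hn, norm_one]
        gcongr
    have hI2 := hI.const_smul ((2 * Real.pi * I : ℂ)⁻¹)
    refine hI2.congr fun p hp => ?_
    have hsub : Metric.closedBall (0:ℂ) τ ⊆ Metric.ball 0 4 :=
      Metric.closedBall_subset_ball (by linarith)
    have := DiffContOnCl.circleIntegral_one_div_sub_center_pow_smul (c := 0) (R := τ)
      (f := fun ζ : ℂ => G (p.1, w0 + ζ • p.2)) hτ k
      (((hkd p hp).mono hsub).mono Metric.closure_ball_subset_closedBall).diffContOnCl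
    rw [circleIntegral, intervalIntegral.integral_of_le (by positivity)] at this
    show c p k = (2 * Real.pi * I : ℂ)⁻¹ • (∫ θ in Set.Ioc 0 (2 * Real.pi),
        deriv (circleMap 0 τ) θ • ((1 / (circleMap 0 τ θ - 0) ^ (k+1)) •
          G (p.1, w0 + (circleMap 0 τ θ) • p.2)))
    rw [this]
    simp only [c, smul_eq_mul]
    have : (2 * Real.pi * I : ℂ) ≠ 0 := Complex.two_pi_I_ne_zero
    field_simp
  have hsg : Summable (fun k : ℕ => B * (1/2 : ℝ) ^ k) :=
    (summable_geometric_of_lt_one (by norm_num) (by norm_num)).mul_left B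
  have hInt : DifferentiableOn ℂ (fun p => ∫ k, c p k ∂(MeasureTheory.Measure.count)) V := by
    refine eow_integral_hol hVo (g := fun k => B * (1/2) ^ k) ?_ ?_ ?_ ?_
    · exact fun p hp => (measurable_of_countable _).aestronglyMeasurable
    · exact Eventually.of_forall hcd
    · rw [MeasureTheory.integrable_count_iff]
      exact hsg.norm
    · exact Eventually.of_forall fun k p hp => hcb p hp k
  have hfin : DifferentiableOn ℂ (fun p : X × Y => G (p.1, w0 + p.2)) V := by
    refine hInt.congr fun p hp => ?_
    have hs : Summable (fun k => ‖c p k‖) :=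
      Summable.of_nonneg_of_le (fun _ => norm_nonneg _) (hcb p hp) hsg
    rw [MeasureTheory.integral_countable (MeasureTheory.integrable_count_iff.2 hs)]
    simp [(hcsum p hp).tsum_eq]
  have hsh : DifferentiableOn ℂ (fun p : X × Y => (p.1, p.2 - w0))
      (Metric.ball (0:X) η ×ˢ Metric.ball w0 δ) := by
    apply Differentiable.differentiableOn
    exact differentiable_fst.prodMk (differentiable_snd.sub_const _)
  refine (hfin.comp hsh fun p hp => ⟨hp.1, ?_⟩).congr fun p hp => ?_
  · have := hp.2
    rw [Metric.mem_ball, dist_eq_norm] at this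
    rwa [mem_ball_zero_iff]
  · simp

theorem eow_flat2 {d : ℕ} (hd : 1 ≤ d) {p m : (Fin d → ℂ) → ℂ} {B : ℝ}
    (hcp : ContinuousOn p {w | ‖w‖ < 6 ∧ ((∀ j, 0 < (w j).im) ∨ ∀ j, (w j).im = 0)})
    (hcm : ContinuousOn m {w | ‖w‖ < 6 ∧ ((∀ j, (w j).im < 0) ∨ ∀ j, (w j).im = 0)})
    (hp : DifferentiableOn ℂ p {w | ‖w‖ < 6 ∧ ∀ j, 0 < (w j).im})
    (hm : DifferentiableOn ℂ m {w | ‖w‖ < 6 ∧ ∀ j, (w j).im < 0})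
    (heq : ∀ w : Fin d → ℂ, ‖w‖ < 6 → (∀ j, (w j).im = 0) → p w = m w)
    (hBp : ∀ w : Fin d → ℂ, ‖w‖ < 6 → ((∀ j, 0 < (w j).im) ∨ ∀ j, (w j).im = 0) → ‖p w‖ ≤ B)
    (hBm : ∀ w : Fin d → ℂ, ‖w‖ < 6 → (∀ j, (w j).im < 0) → ‖m w‖ ≤ B) :
    ∃ g : (Fin d → ℂ) → ℂ, DifferentiableOn ℂ g (Metric.ball 0 1) ∧
      (∀ w ∈ Metric.ball (0 : Fin d → ℂ) 1, ‖g w‖ ≤ B) ∧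
      (∀ w ∈ Metric.ball (0 : Fin d → ℂ) 1, (∀ j, (w j).im = 0) → g w = p w) ∧
      (∀ w ∈ Metric.ball (0 : Fin d → ℂ) 1, (∀ j, 0 < (w j).im) → g w = p w) := by
  classical
  have j0 : Fin d := ⟨0, hd⟩
  let f : (Fin d → ℂ) → ℂ := fun w => if ∀ j, 0 ≤ (w j).im then p w else m w
  have fp : ∀ w : Fin d → ℂ, (∀ j, 0 < (w j).im) → f w = p w := fun w hw =>
    if_pos fun j => (hw j).le
  have f0 : ∀ w : Fin d → ℂ, (∀ j, (w j).im = 0) → f w = p w := fun w hw =>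
    if_pos fun j => (hw j).ge
  have fm : ∀ w : Fin d → ℂ, (∀ j, (w j).im < 0) → f w = m w := fun w hw =>
    if_neg fun h => absurd (hw j0) (not_lt.2 (h j0))
  have hfp : ContinuousOn f {w | ‖w‖ < 6 ∧ ((∀ j, 0 < (w j).im) ∨ ∀ j, (w j).im = 0)} :=
    hcp.congr fun w hw => hw.2.elim (fp w) (f0 w)
  have hfm : ContinuousOn f {w | ‖w‖ < 6 ∧ ((∀ j, (w j).im < 0) ∨ ∀ j, (w j).im = 0)} :=
    hcm.congr fun w hw => hw.2.elim (fm w) fun h => (f0 w h).trans (heq w hw.1 h)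
  have hcl1 : IsClosed {w : Fin d → ℂ | ∀ j, 0 ≤ (w j).im} := by
    rw [Set.ofPred_forall]
    exact isClosed_iInter fun j => isClosed_le continuous_const (by fun_prop)
  have hcl2 : IsClosed {w : Fin d → ℂ | ∀ j, (w j).im ≤ 0} := by
    rw [Set.ofPred_forall]
    exact isClosed_iInter fun j => isClosed_le (by fun_prop) continuous_const
  have hc1 : ∀ x : Fin d → ℂ, x ∈ closure {w : Fin d → ℂ | ‖w‖ < 6 ∧ ((∀ j, 0 < (w j).im) ∨ ∀ j, (w j).im = 0)} → ∀ j, 0 ≤ (x j).im := by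
    intro x hx
    exact closure_minimal (fun w hw => hw.2.elim (fun h j => (h j).le) fun h j => (h j).ge) hcl1 hx
  have hc2 : ∀ x : Fin d → ℂ, x ∈ closure {w : Fin d → ℂ | ‖w‖ < 6 ∧ ((∀ j, (w j).im < 0) ∨ ∀ j, (w j).im = 0)} → ∀ j, (x j).im ≤ 0 := by
    intro x hx
    exact closure_minimal (fun w hw => hw.2.elim (fun h j => (h j).le) fun h j => (h j).le) hcl2 hx
  have hcont : ContinuousOn f {w | ‖w‖ < 6 ∧
      ((∀ j, 0 < (w j).im) ∨ (∀ j, (w j).im < 0) ∨ ∀ j, (w j).im = 0)} := by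
    have hun : {w : Fin d → ℂ | ‖w‖ < 6 ∧
        ((∀ j, 0 < (w j).im) ∨ (∀ j, (w j).im < 0) ∨ ∀ j, (w j).im = 0)} =
        {w | ‖w‖ < 6 ∧ ((∀ j, 0 < (w j).im) ∨ ∀ j, (w j).im = 0)} ∪
        {w | ‖w‖ < 6 ∧ ((∀ j, (w j).im < 0) ∨ ∀ j, (w j).im = 0)} := by
      ext w
      simp only [Set.mem_ofPred_eq, Set.mem_union]
      tauto
    intro x hx
    have hx' := hx.2
    rw [hun]
    rcases hx' with h | h | h
    · refine (hfp x ⟨hx.1, Or.inl h⟩).union (continuousWithinAt_of_notMem_closure fun hh => ?_)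
      exact absurd (hc2 x hh j0) (not_le.2 (h j0))
    · refine ContinuousWithinAt.union (continuousWithinAt_of_notMem_closure fun hh => ?_)
        (hfm x ⟨hx.1, Or.inl h⟩)
      exact absurd (hc1 x hh j0) (not_le.2 (h j0))
    · exact (hfp x ⟨hx.1, Or.inr h⟩).union (hfm x ⟨hx.1, Or.inr h⟩)
  obtain ⟨g, hg1, hg2, hg3, hg4⟩ := eow_flat hd (f := f) (B := B) hcont
    (hp.congr fun w hw => fp w hw.2) (hm.congr fun w hw => fm w hw.2) (by
      intro w hw h
      rcases h with h | h | h
      · rw [fp w h]; exact hBp w hw (Or.inl h)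
      · rw [fm w h]; exact hBm w hw h
      · rw [f0 w h]; exact hBp w hw (Or.inr h))
  exact ⟨g, hg1, hg2, fun w hw h => (hg3 w hw h).trans (f0 w h),
    fun w hw h => (hg4 w hw h).trans (fp w h)⟩

theorem eow_line {E : Type*} [NormedAddCommGroup E] [NormedSpace ℝ E] {d : ℕ}
    {f : E → Fin d → ℝ} (hf : AnalyticAt ℝ f 0) (h0 : f 0 = 0) (h1 : fderiv ℝ f 0 = 0) :
    ∃ r > 0, ∃ C > 0, ∀ x y : E, ‖x‖ + 2 * ‖y‖ < r → ∃ L : ℂ → Fin d → ℂ,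
      DifferentiableOn ℂ L (Metric.ball 0 2) ∧
      (∀ τ : ℝ, |τ| < 2 → L τ = fun k => ((f (x + τ • y) k : ℝ) : ℂ)) ∧
      ‖L Complex.I‖ ≤ C * (‖x‖ + ‖y‖) ^ 2 := by
  obtain ⟨P, R, hP⟩ := hf
  have hP0 : P 0 = 0 := by
    ext v
    rw [hP.coeff_zero, h0]; simp
  have hP1 : ‖P 1‖ = 0 := by
    have := hP.hasFPowerSeriesAt.fderiv_eq
    rw [h1] at this
    have h2 : P 1 = 0 := by
      apply (continuousMultilinearCurryFin1 ℝ E (Fin d → ℝ)).injective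
      rw [← this, map_zero]
    rw [h2, norm_zero]
  obtain ⟨r, hr0, hrR⟩ : ∃ r : NNReal, 0 < r ∧ (r : ENNReal) < R := by
    obtain ⟨r, h1, h2⟩ := ENNReal.lt_iff_exists_nnreal_btwn.1 hP.r_pos
    exact ⟨r, by exact_mod_cast h1, h2⟩
  have hsum : Summable fun k => ‖P k‖ * (r : ℝ) ^ k :=
    P.summable_norm_mul_pow (hrR.trans_le hP.r_le)
  have hr0' : (0 : ℝ) < r := hr0
  set C : ℝ := (∑' k, ‖P k‖ * (r : ℝ) ^ k) / r ^ 2 with hC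
  have hC0 : 0 ≤ C := by positivity
  refine ⟨r, hr0', C + 1, by positivity, fun x y hxy => ?_⟩
  let T : ℕ → ℂ → Fin d → ℂ := fun k ζ j =>
    ∑ s : Finset (Fin k), ζ ^ (k - s.card) * ((P k (s.piecewise (fun _ => x) (fun _ => y)) j : ℝ) : ℂ)
  have hTb : ∀ k ζ j, ‖T k ζ j‖ ≤ ‖P k‖ * (‖x‖ + ‖ζ‖ * ‖y‖) ^ k := by
    intro k ζ j
    have e := Fin.sum_pow_mul_eq_add_pow (n := k) (‖x‖) (‖ζ‖ * ‖y‖)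
    rw [← e, Finset.mul_sum]
    refine norm_sum_le_of_le _ fun s _ => ?_
    rw [norm_mul, norm_pow, Complex.norm_real]
    have h1 : ‖P k (s.piecewise (fun _ => x) (fun _ => y)) j‖ ≤
        ‖P k‖ * (‖x‖ ^ s.card * ‖y‖ ^ (k - s.card)) := by
      refine (norm_le_pi_norm _ j).trans (((P k).le_opNorm _).trans_eq ?_)
      congr 1
      have : ∀ i, ‖s.piecewise (fun _ => x) (fun _ => y) i‖ =
          s.piecewise (fun _ => ‖x‖) (fun _ => ‖y‖) i := by
        intro i
        by_cases hi : i ∈ s <;> simp [hi]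
      simp only [this]
      rw [Finset.prod_piecewise]
      simp [Finset.card_sdiff]
    calc _ ≤ ‖ζ‖ ^ (k - s.card) * (‖P k‖ * (‖x‖ ^ s.card * ‖y‖ ^ (k - s.card))) := by gcongr
      _ = _ := by rw [mul_pow]; ring
  have hTr : ∀ k (τ : ℝ) j, T k τ j = ((P k (fun _ => x + τ • y) j : ℝ) : ℂ) := by
    intro k τ j
    have e : (P k) (fun _ => x + τ • y) = ∑ s : Finset (Fin k), (P k) (s.piecewise (fun _ => x) (fun _ => τ • y)) :=
      (P k).toMultilinearMap.map_add_univ (fun _ => x) (fun _ => τ • y)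
    have e2 : ∀ s : Finset (Fin k), (P k) (s.piecewise (fun _ => x) (fun _ => τ • y)) =
        τ ^ (k - s.card) • (P k) (s.piecewise (fun _ => x) (fun _ => y)) := by
      intro s
      have := (P k).toMultilinearMap.map_piecewise_smul (fun _ => τ) (s.piecewise (fun _ => x) (fun _ => y)) sᶜ
      simp only [Finset.prod_const, Finset.card_compl, Fintype.card_fin] at this
      refine Eq.trans ?_ this
      show _ = (P k) _
      congr 1
      ext i
      by_cases hi : i ∈ s <;> simp [hi]
    rw [e]
    simp only [e2, Finset.sum_apply, Pi.smul_apply, smul_eq_mul, T]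
    push_cast
    rfl
  have hle : ∀ ζ : ℂ, ζ ∈ Metric.ball (0:ℂ) 2 → ‖x‖ + ‖ζ‖ * ‖y‖ ≤ r := by
    intro ζ hζ
    have : ‖ζ‖ < 2 := mem_ball_zero_iff.1 hζ
    nlinarith [norm_nonneg y]
  refine ⟨fun ζ j => ∑' k, T k ζ j, ?_, ?_, ?_⟩
  · rw [differentiableOn_pi]
    intro j
    refine differentiableOn_tsum_of_summable_norm hsum (fun k => ?_) Metric.isOpen_ball ?_
    · apply Differentiable.differentiableOn
      simp only [T]
      fun_prop
    · intro k ζ hζ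
      refine (hTb k ζ j).trans ?_
      gcongr
      exact hle ζ hζ
  · intro τ hτ
    ext j
    have hm : x + τ • y ∈ Metric.eball (0 : E) R := by
      rw [mem_eball_zero_iff]
      refine lt_trans ?_ hrR
      rw [← ofReal_norm, ← ENNReal.ofReal_coe_nnreal, ENNReal.ofReal_lt_ofReal_iff hr0']
      have := norm_add_le x (τ • y)
      rw [norm_smul, Real.norm_eq_abs] at this
      nlinarith [norm_nonneg y]
    have hs := hP.hasSum hm
    rw [zero_add] at hs
    have hs2 := (Pi.hasSum.1 hs) j
    have hs3 := Complex.hasSum_ofReal.2 hs2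
    simp only [hTr]
    exact hs3.tsum_eq
  · rw [pi_norm_le_iff_of_nonneg (by positivity)]
    intro j
    have hI := hle Complex.I (by simp)
    rw [Complex.norm_I, one_mul] at hI
    have hb : ∀ k, ‖T k Complex.I j‖ ≤ (‖P k‖ * (r : ℝ) ^ k) * ((‖x‖ + ‖y‖) / r) ^ 2 := by
      intro k
      refine (hTb k _ j).trans ?_
      rw [Complex.norm_I, one_mul]
      match k with
      | 0 => rw [hP0]; simp
      | 1 => rw [hP1]; simp
      | k + 2 =>
        have : (‖x‖ + ‖y‖) ^ (k + 2) ≤ (r : ℝ) ^ k * (‖x‖ + ‖y‖) ^ 2 := by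
          rw [pow_add]; gcongr
        calc _ ≤ ‖P (k+2)‖ * ((r : ℝ) ^ k * (‖x‖ + ‖y‖) ^ 2) := by gcongr
          _ = _ := by field_simp; ring
    have := tsum_of_norm_bounded (hsum.hasSum.mul_right _) hb
    refine this.trans ?_
    have e : (∑' k, ‖P k‖ * (r : ℝ) ^ k) * ((‖x‖ + ‖y‖) / r) ^ 2 = C * (‖x‖ + ‖y‖) ^ 2 := by
      rw [hC]; field_simp
    rw [e]
    nlinarith [sq_nonneg (‖x‖ + ‖y‖)]

/-- The holomorphic extension is quadratically small, uniformly in `z`. -/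
theorem eow_phihat {n d : ℕ} (φ : (Fin n → ℂ) × (Fin d → ℝ) → Fin d → ℝ)
    (hφan : AnalyticAt ℝ φ 0)
    (hφ0 : φ 0 = 0) (hdφ0 : fderiv ℝ φ 0 = 0)
    (φhat : (Fin n → ℂ) × (Fin d → ℂ) → Fin d → ℂ)
    (hφhat_real : ∀ᶠ p in 𝓝 (0 : (Fin n → ℂ) × (Fin d → ℝ)),
      φhat (p.1, fun k => (p.2 k : ℂ)) = fun k => ((φ p k : ℝ) : ℂ))
    (hφhat_hol : ∀ᶠ zw in 𝓝 (0 : (Fin n → ℂ) × (Fin d → ℂ)),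
      DifferentiableAt ℂ (fun w => φhat (zw.1, w)) zw.2) :
    ∃ r > 0, ∃ C > 0, (∀ z w, ‖z‖ < r → ‖w‖ < r → DifferentiableAt ℂ (fun w => φhat (z, w)) w) ∧
      (∀ z s, ‖z‖ < r → ‖s‖ < r →
        φhat (z, fun k => ((s k : ℝ) : ℂ)) = fun k => ((φ (z, s) k : ℝ) : ℂ)) ∧
      (∀ z w, ‖z‖ < r → ‖w‖ < r → ‖φhat (z, w)‖ ≤ C * (‖z‖ + ‖w‖) ^ 2) := by
  obtain ⟨r1, hr1, C, hC, hL⟩ := eow_line hφan hφ0 hdφ0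
  obtain ⟨r2, hr2, h2⟩ := Metric.eventually_nhds_iff_ball.1 hφhat_real
  obtain ⟨r3, hr3, h3⟩ := Metric.eventually_nhds_iff_ball.1 hφhat_hol
  have h2' : ∀ z s, ‖z‖ < r2 → ‖s‖ < r2 →
      φhat (z, fun k => ((s k : ℝ) : ℂ)) = fun k => ((φ (z, s) k : ℝ) : ℂ) := by
    intro z s hz hs
    exact h2 (z, s) (by rw [mem_ball_zero_iff, Prod.norm_mk]; exact max_lt hz hs)
  have h3' : ∀ z w, ‖z‖ < r3 → ‖w‖ < r3 → DifferentiableAt ℂ (fun w => φhat (z, w)) w := by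
    intro z s hz hs
    exact h3 (z, s) (by rw [mem_ball_zero_iff, Prod.norm_mk]; exact max_lt hz hs)
  set r := min (r1 / 4) (min (r2 / 3) (r3 / 3)) with hr
  have hra : r ≤ r1 / 4 := min_le_left _ _
  have hrb : r ≤ r2 / 3 := (min_le_right _ _).trans (min_le_left _ _)
  have hrc : r ≤ r3 / 3 := (min_le_right _ _).trans (min_le_right _ _)
  have hr0 : 0 < r := by positivity
  refine ⟨r, hr0, 4 * C, by positivity, fun z w hz hw => h3' z w (by linarith) (by linarith),
    fun z s hz hs => h2' z s (by linarith) (by linarith), fun z w hz hw => ?_⟩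
  set a : Fin d → ℝ := fun k => (w k).re with ha
  set b : Fin d → ℝ := fun k => (w k).im with hb
  have han : ‖a‖ ≤ ‖w‖ := by
    rw [pi_norm_le_iff_of_nonneg (norm_nonneg _)]
    exact fun k => (Complex.abs_re_le_norm _).trans (norm_le_pi_norm w k)
  have hbn : ‖b‖ ≤ ‖w‖ := by
    rw [pi_norm_le_iff_of_nonneg (norm_nonneg _)]
    exact fun k => (Complex.abs_im_le_norm _).trans (norm_le_pi_norm w k)
  have hxn : ‖((z, a) : (Fin n → ℂ) × (Fin d → ℝ))‖ ≤ ‖z‖ + ‖w‖ := by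
    rw [Prod.norm_mk]
    exact max_le (by linarith [norm_nonneg w]) (by linarith [norm_nonneg z])
  have hyn : ‖((0, b) : (Fin n → ℂ) × (Fin d → ℝ))‖ ≤ ‖w‖ := by
    rw [Prod.norm_mk, norm_zero]
    exact max_le (norm_nonneg w) hbn
  obtain ⟨L, hLd, hLr, hLb⟩ := hL (z, a) (0, b) (by linarith)
  have hcn : ∀ ζ : ℂ, ‖ζ‖ < 2 → ‖(fun k => (a k : ℂ) + ζ * (b k : ℂ))‖ < r3 := by
    intro ζ hζ
    have : ‖(fun k => (a k : ℂ) + ζ * (b k : ℂ))‖ ≤ ‖w‖ + 2 * ‖w‖ := by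
      rw [pi_norm_le_iff_of_nonneg (by positivity)]
      intro k
      refine (norm_add_le _ _).trans ?_
      rw [norm_mul, Complex.norm_real, Complex.norm_real]
      have e1 := (norm_le_pi_norm a k).trans han
      have e2 := (norm_le_pi_norm b k).trans hbn
      gcongr
    linarith
  have key : Set.EqOn (fun ζ : ℂ => φhat (z, fun k => (a k : ℂ) + ζ * (b k : ℂ))) L
      (Metric.ball 0 2) := by
    refine AnalyticOnNhd.eqOn_of_preconnected_of_frequently_eq (𝕜 := ℂ) (z₀ := 0)
      (DifferentiableOn.analyticOnNhd ?_ Metric.isOpen_ball)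
      (DifferentiableOn.analyticOnNhd hLd Metric.isOpen_ball)
      (convex_ball _ _).isPreconnected (by simp) ?_
    · intro ζ hζ
      apply DifferentiableAt.differentiableWithinAt
      have e := h3' z _ (by linarith) (hcn ζ (mem_ball_zero_iff.1 hζ))
      have e2 : DifferentiableAt ℂ (fun ζ : ℂ => (fun k => (a k : ℂ) + ζ * (b k : ℂ))) ζ := by
        rw [differentiableAt_pi]
        intro k
        fun_prop
      exact DifferentiableAt.comp (𝕜 := ℂ) (g := fun w => φhat (z, w)) ζ e e2
    · have h_real : ∀ᶠ τ : ℝ in 𝓝[≠] 0, φhat (z, fun k => (a k : ℂ) + (τ : ℂ) * (b k : ℂ)) = L τ := by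
        apply eventually_nhdsWithin_of_eventually_nhds
        filter_upwards [Metric.ball_mem_nhds (0 : ℝ) two_pos] with τ hτ
        have hτ' : |τ| < 2 := by simpa using hτ
        rw [hLr τ hτ']
        have e := h2' z (a + τ • b) (by linarith) ?_
        · simp only [Pi.add_apply, Pi.smul_apply, smul_eq_mul, Complex.ofReal_add,
            Complex.ofReal_mul] at e
          rw [e]
          simp
        · have e1 := norm_add_le a (τ • b)
          rw [norm_smul, Real.norm_eq_abs] at e1
          nlinarith [norm_nonneg b]
      have ht : Tendsto (fun τ : ℝ => (τ : ℂ)) (𝓝[≠] 0) (𝓝[≠] 0) := by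
        refine tendsto_nhdsWithin_iff.2 ⟨?_, ?_⟩
        · have : Tendsto (fun τ : ℝ => (τ : ℂ)) (𝓝 0) (𝓝 ((0:ℝ):ℂ)) :=
            Complex.continuous_ofReal.tendsto 0
          rw [Complex.ofReal_zero] at this
          exact this.mono_left nhdsWithin_le_nhds
        · filter_upwards [self_mem_nhdsWithin] with τ hτ
          simpa using hτ
      exact ht.frequently h_real.frequently
  have hw' : (fun k => (a k : ℂ) + Complex.I * (b k : ℂ)) = w := by
    ext k
    rw [mul_comm]
    exact Complex.re_add_im (w k)
  have kI := key (show Complex.I ∈ Metric.ball (0:ℂ) 2 by simp)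
  simp only [hw'] at kI
  rw [kI]
  refine hLb.trans ?_
  have : ‖((z, a) : (Fin n → ℂ) × (Fin d → ℝ))‖ + ‖((0, b) : (Fin n → ℂ) × (Fin d → ℝ))‖
     ≤ 2 * (‖z‖ + ‖w‖) := by linarith [norm_nonneg z]
  calc _ ≤ C * (2 * (‖z‖ + ‖w‖)) ^ 2 := by gcongr
    _ = _ := by ring

/-- Quantitative holomorphic inverse of a small perturbation of the identity. -/
theorem eow_inverse {E : Type*} [NormedAddCommGroup E] [NormedSpace ℂ E] [CompleteSpace E]
    {f : E → E} {R M : ℝ} (hR : 0 < R) (hM : M ≤ R / 16)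
    (hf : DifferentiableOn ℂ f (Metric.ball 0 R)) (hb : ∀ w ∈ Metric.ball (0 : E) R, ‖f w‖ ≤ M) :
    ∃ σ : E → E, DifferentiableOn ℂ σ (Metric.ball 0 (R / 8)) ∧
      (∀ w ∈ Metric.ball (0 : E) (R / 8), ‖σ w‖ ≤ R / 4 ∧ σ w + f (σ w) = w) ∧
      (∀ w ∈ Metric.ball (0 : E) (R / 2), w + f w ∈ Metric.ball (0 : E) (R / 8) →
        σ (w + f w) = w) := by
  have hsub : ∀ c ∈ Metric.ball (0 : E) (R / 2), Metric.ball c (R / 2) ⊆ Metric.ball 0 R := by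
    intro c hc
    apply Metric.ball_subset_ball'
    have := Metric.mem_ball.1 hc
    linarith
  have hfd : ∀ c ∈ Metric.ball (0 : E) (R / 2), ‖fderiv ℂ f c‖ ≤ 1 / 4 := by
    intro c hc
    have h := Complex.norm_fderiv_le_div_of_mapsTo_ball (f := f) (c := c) (R₁ := R / 2) (R₂ := 2 * M)
      (hf.mono (hsub c hc)) ?_ (by linarith)
    · refine h.trans ?_
      rw [div_le_iff₀ (by linarith)]
      linarith
    · intro x hx
      rw [Metric.mem_closedBall, dist_eq_norm]
      refine (norm_sub_le _ _).trans ?_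
      have h1 := hb x (hsub c hc hx)
      have h2 := hb c (hsub c hc (Metric.mem_ball_self (by linarith)))
      linarith
  have hda : ∀ c ∈ Metric.ball (0 : E) (R / 2), DifferentiableAt ℂ f c := fun c hc =>
    hf.differentiableAt (Metric.isOpen_ball.mem_nhds
      (Metric.ball_subset_ball (by linarith) hc))
  have hlip : ∀ x ∈ Metric.ball (0 : E) (R / 2), ∀ y ∈ Metric.ball (0 : E) (R / 2),
      ‖f x - f y‖ ≤ 1 / 4 * ‖x - y‖ := by
    intro x hx y hy
    exact Convex.norm_image_sub_le_of_norm_fderiv_le (𝕜 := ℂ) hda hfd (convex_ball _ _) hy hx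
  have hanti : ∀ x ∈ Metric.ball (0 : E) (R / 2), ∀ y ∈ Metric.ball (0 : E) (R / 2),
      ‖x - y‖ ≤ 4 / 3 * ‖(x + f x) - (y + f y)‖ := by
    intro x hx y hy
    have h1 := hlip x hx y hy
    have h2 : x - y = ((x + f x) - (y + f y)) - (f x - f y) := by abel
    have h3 := norm_sub_le ((x + f x) - (y + f y)) (f x - f y)
    rw [← h2] at h3
    linarith
  have happ : ApproximatesLinearOn (fun x => x + f x) (ContinuousLinearMap.id ℂ E)
      (Metric.ball 0 (R / 2)) (1 / 4) := by
    intro x hx y hy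
    have h1 := hlip x hx y hy
    have h2 : x + f x - (y + f y) - (ContinuousLinearMap.id ℂ E) (x - y) = f x - f y := by
      simp; abel
    rw [h2]
    simpa using h1
  have hsurj := happ.surjOn_closedBall_of_nonlinearRightInverse
    (ε := R / 4) (b := 0) ⟨id, 1, by simp, by simp⟩ (by linarith)
    (Metric.closedBall_subset_ball (by linarith))
  have hex : ∀ w ∈ Metric.ball (0 : E) (R / 8), ∃ x : E, ‖x‖ ≤ R / 4 ∧ x + f x = w := by
    intro w hw
    have h1 : w ∈ Metric.closedBall ((0 : E) + f 0) ((((1 : NNReal) : ℝ)⁻¹ - ((1 / 4 : NNReal) : ℝ)) * (R / 4)) := by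
      rw [Metric.mem_closedBall, dist_eq_norm, zero_add]
      have h1 := norm_sub_le w (f 0)
      have h2 := hb 0 (Metric.mem_ball_self hR)
      have h3 := mem_ball_zero_iff.1 hw
      push_cast
      linarith
    obtain ⟨x, hx, hxw⟩ := hsurj h1
    exact ⟨x, mem_closedBall_zero_iff.1 hx, hxw⟩
  choose! σ hσ1 hσ2 using hex
  have hσb : ∀ w ∈ Metric.ball (0 : E) (R / 8), σ w ∈ Metric.ball (0 : E) (R / 2) := by
    intro w hw
    rw [mem_ball_zero_iff]
    have := hσ1 w hw
    linarith
  refine ⟨σ, ?_, fun w hw => ⟨hσ1 w hw, hσ2 w hw⟩, ?_⟩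
  · intro w hw
    apply DifferentiableAt.differentiableWithinAt
    have hnh := Metric.isOpen_ball.mem_nhds hw
    have hcont : ContinuousAt σ w := by
      have : LipschitzOnWith (4 / 3) σ (Metric.ball 0 (R / 8)) := by
        refine LipschitzOnWith.of_dist_le_mul fun x hx y hy => ?_
        rw [dist_eq_norm, dist_eq_norm]
        have := hanti _ (hσb x hx) _ (hσb y hy)
        rw [hσ2 x hx, hσ2 y hy] at this
        simpa using this
      exact this.continuousOn.continuousAt hnh
    have hnorm : ‖-fderiv ℂ f (σ w)‖ < 1 := by
      rw [norm_neg]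
      exact (hfd _ (hσb w hw)).trans_lt (by norm_num)
    let u : (E →L[ℂ] E)ˣ := Units.oneSub _ hnorm
    let e : E ≃L[ℂ] E := ContinuousLinearEquiv.unitsEquiv ℂ E u
    have he : HasFDerivAt (fun x => x + f x) (e : E →L[ℂ] E) (σ w) := by
      have h1 := (hasFDerivAt_id (𝕜 := ℂ) (σ w)).add (hda _ (hσb w hw)).hasFDerivAt
      refine h1.congr_fderiv ?_
      ext v
      show v + fderiv ℂ f (σ w) v = (u : E →L[ℂ] E) v
      simp [u]
    exact (HasFDerivAt.of_local_left_inverse hcont he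
      (Filter.eventually_of_mem hnh fun y hy => hσ2 y hy)).differentiableAt
  · intro w hw hw2
    have := hanti _ (hσb _ hw2) w hw
    rw [hσ2 _ hw2, sub_self, norm_zero, mul_zero] at this
    exact sub_eq_zero.1 (norm_le_zero_iff.1 this)

theorem eow_inj {K : Type*} [Field K] {d : ℕ} {c : K} {t y : Fin d → K} (hc : c ≠ 0)
    (hct : c + ∑ j, t j ≠ 0) (h : ∀ k, c * y k + (∑ j, y j) * t k = 0) : y = 0 := by
  have h1 : ∑ k, (c * y k + (∑ j, y j) * t k) = 0 := Finset.sum_eq_zero fun k _ => h k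
  rw [Finset.sum_add_distrib, ← Finset.mul_sum, ← Finset.mul_sum] at h1
  have h2 : (c + ∑ j, t j) * ∑ j, y j = 0 := by rw [← h1]; ring
  have h3 : ∑ j, y j = 0 := (mul_eq_zero.1 h2).resolve_left hct
  ext k
  have h4 := h k
  rw [h3, zero_mul, add_zero] at h4
  exact (mul_eq_zero.1 h4).resolve_left hc

theorem eow_cone {d : ℕ} (hd : 1 ≤ d) {Γ : Set (Fin d → ℝ)} (hΓo : IsOpen Γ) (hΓne : Γ.Nonempty)
    (hΓcone : ∀ t ∈ Γ, ∀ c : ℝ, 0 < c → c • t ∈ Γ) {a : ℝ} (ha : 0 < a) :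
    ∃ A : (Fin d → ℂ) ≃L[ℂ] (Fin d → ℂ), (∀ w, ‖A w‖ ≤ a * ‖w‖) ∧
      (∀ w, (∀ j, 0 < (w j).im) → (fun k => (A w k).im) ∈ Γ) ∧
      (∀ w, (∀ j, (w j).im = 0) ↔ ∀ k, (A w k).im = 0) := by
  obtain ⟨t, ht⟩ := hΓne
  obtain ⟨c0, hc0, hball⟩ := Metric.isOpen_iff.1 hΓo t ht
  obtain ⟨c, hc, hcc, hct⟩ : ∃ c : ℝ, 0 < c ∧ c < c0 ∧ c + ∑ j, t j ≠ 0 := by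
    by_cases h : c0 / 2 + ∑ j, t j = 0
    · exact ⟨c0 / 3, by linarith, by linarith, fun h2 => by linarith⟩
    · exact ⟨c0 / 2, by linarith, by linarith, h⟩
  let A0 : (Fin d → ℂ) →ₗ[ℂ] (Fin d → ℂ) :=
    { toFun := fun w k => (c : ℂ) * w k + (∑ j, w j) * (t k : ℂ)
      map_add' := by
        intro x y; ext k
        simp only [Pi.add_apply, Finset.sum_add_distrib]; ring
      map_smul' := by
        intro m x; ext k
        simp only [Pi.smul_apply, smul_eq_mul, ← Finset.mul_sum, RingHom.id_apply]; ring }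
  have hinj : Function.Injective A0 := by
    rw [injective_iff_map_eq_zero]
    intro w hw
    refine eow_inj (c := (c : ℂ)) (t := fun k => (t k : ℂ)) (by exact_mod_cast hc.ne')
      (by exact_mod_cast hct) fun k => congrFun hw k
  let A1 : (Fin d → ℂ) ≃L[ℂ] (Fin d → ℂ) := (LinearEquiv.ofInjectiveEndo A0 hinj).toContinuousLinearEquiv
  have hA1 : ∀ w k, A1 w k = (c : ℂ) * w k + (∑ j, w j) * (t k : ℂ) := fun w k => rfl
  set b : ℝ := a / (‖(A1 : (Fin d → ℂ) →L[ℂ] (Fin d → ℂ))‖ + 1) with hb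
  have hb0 : 0 < b := by positivity
  have hbne : (b : ℂ) ≠ 0 := by exact_mod_cast hb0.ne'
  let A : (Fin d → ℂ) ≃L[ℂ] (Fin d → ℂ) :=
    A1.trans (ContinuousLinearEquiv.smulLeft (Units.mk0 (b : ℂ) hbne))
  have hA : ∀ w, A w = (b : ℂ) • A1 w := fun w => rfl
  have him : ∀ w k, (A w k).im = b * (c * (w k).im + (∑ j, (w j).im) * t k) := by
    intro w k
    rw [hA, Pi.smul_apply, hA1, smul_eq_mul, Complex.im_ofReal_mul, Complex.add_im, Complex.im_ofReal_mul, Complex.im_mul_ofReal, Complex.im_sum]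
  refine ⟨A, ?_, ?_, ?_⟩
  · intro w
    rw [hA, norm_smul, Complex.norm_real, Real.norm_eq_abs, abs_of_pos hb0]
    have h1 := (A1 : (Fin d → ℂ) →L[ℂ] (Fin d → ℂ)).le_opNorm w
    rw [ContinuousLinearEquiv.coe_coe] at h1
    have h2 : b * (‖(A1 : (Fin d → ℂ) →L[ℂ] (Fin d → ℂ))‖ + 1) = a := by
      rw [hb]; field_simp
    calc b * ‖A1 w‖ ≤ b * ((‖(A1 : (Fin d → ℂ) →L[ℂ] (Fin d → ℂ))‖ + 1) * ‖w‖) := by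
          gcongr; linarith [norm_nonneg w]
      _ = a * ‖w‖ := by rw [← mul_assoc, h2]
  · intro w hw
    set S : ℝ := ∑ j, (w j).im with hS
    have hS0 : 0 < S := Finset.sum_pos (fun j _ => hw j) ⟨⟨0, hd⟩, Finset.mem_univ _⟩
    have hmem : (fun k => t k + c / S * (w k).im) ∈ Γ := by
      apply hball
      rw [Metric.mem_ball, dist_eq_norm]
      refine lt_of_le_of_lt ?_ hcc
      rw [pi_norm_le_iff_of_nonneg hc.le]
      intro k
      have h1 : (w k).im ≤ S := Finset.single_le_sum (f := fun j => (w j).im) (fun j _ => (hw j).le) (Finset.mem_univ k)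
      have h2 := hw k
      simp only [Pi.sub_apply, add_sub_cancel_left]
      rw [Real.norm_eq_abs, abs_of_pos (by positivity), div_mul_eq_mul_div, div_le_iff₀ hS0]
      gcongr
    have := hΓcone _ hmem (b * S) (by positivity)
    convert this using 1
    ext k
    rw [him]
    simp only [Pi.smul_apply, smul_eq_mul]
    field_simp
    ring
  · intro w
    constructor
    · intro h k
      rw [him]; simp [h]
    · intro h j
      have := eow_inj (K := ℝ) (c := c) (t := t) (y := fun j => (w j).im) hc.ne' hct fun k => by
        have := h k
        rw [him] at this
        exact (mul_eq_zero.1 this).resolve_left hb0.ne'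
      exact congrFun this j

theorem eow_bdd {X : Type*} [NormedAddCommGroup X] {F : X → ℂ} {T : Set X}
    (hF : ContinuousOn F T) (h0 : (0 : X) ∈ T) :
    ∃ ρ > 0, ∀ x ∈ T, ‖x‖ < ρ → ‖F x‖ ≤ ‖F 0‖ + 1 := by
  obtain ⟨ρ, hρ, h⟩ := Metric.continuousWithinAt_iff.1 (hF 0 h0) 1 one_pos
  refine ⟨ρ, hρ, fun x hx hxr => ?_⟩
  have h1 := h hx (by rwa [dist_zero_right])
  rw [dist_eq_norm] at h1
  have h2 := norm_add_le (F x - F 0) (F 0)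
  rw [sub_add_cancel] at h2
  linarith

theorem eow_psi {n d : ℕ} (φhat : Amb n d → Fin d → ℂ) (z : Fin n → ℂ) (w : Fin d → ℂ) :
    PsiW φhat (z, (fun k => (w k).re), fun k => (w k).im) =
      (z, w + Complex.I • φhat (z, w)) := by
  have e : (fun k => ((w k).re : ℂ) + Complex.I * ((w k).im : ℂ)) = w := by
    ext k
    rw [mul_comm]
    exact Complex.re_add_im (w k)
  have e' : ∀ k, ((w k).re : ℂ) + Complex.I * ((w k).im : ℂ) = w k := fun k => congrFun e k
  unfold PsiW
  simp only [e']
  rfl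

theorem eow_re_norm {d : ℕ} (w : Fin d → ℂ) : ‖fun k => (w k).re‖ ≤ ‖w‖ := by
  rw [pi_norm_le_iff_of_nonneg (norm_nonneg _)]
  exact fun k => (Complex.abs_re_le_norm _).trans (norm_le_pi_norm w k)

theorem eow_im_norm {d : ℕ} (w : Fin d → ℂ) : ‖fun k => (w k).im‖ ≤ ‖w‖ := by
  rw [pi_norm_le_iff_of_nonneg (norm_nonneg _)]
  exact fun k => (Complex.abs_im_le_norm _).trans (norm_le_pi_norm w k)

theorem eow_ofReal_norm {d : ℕ} (s : Fin d → ℝ) : ‖fun k => ((s k : ℝ) : ℂ)‖ ≤ ‖s‖ := by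
  rw [pi_norm_le_iff_of_nonneg (norm_nonneg _)]
  exact fun k => by rw [Complex.norm_real]; exact norm_le_pi_norm s k

theorem eow_mem_wedge {n d : ℕ} (φhat : Amb n d → Fin d → ℂ) {Γ : Set (Fin d → ℝ)} {ε : ℝ}
    {z : Fin n → ℂ} {w : Fin d → ℂ} (hz : ‖z‖ < ε) (hw : ‖w‖ < ε)
    (hΓ : (fun k => (w k).im) ∈ Γ) :
    ((z, w + Complex.I • φhat (z, w)) : Amb n d) ∈ PsiW φhat '' WedgeSet Γ ε :=
  ⟨(z, (fun k => (w k).re), fun k => (w k).im),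
    ⟨hz, (eow_re_norm w).trans_lt hw, (eow_im_norm w).trans_lt hw, hΓ⟩, eow_psi φhat z w⟩

set_option maxHeartbeats 2000000

/-- edge-of-the-wedge for CR functions: a CR function of class `C¹` on `M`
which extends continuously to holomorphic functions in the wedges `W_Γ` and `W_{−Γ}`
extends holomorphically to a full neighborhood of the origin. -/
theorem extends_up_down_implies_extends {n d : ℕ} (hn : 1 ≤ n) (hd : 1 ≤ d)
    -- the manifold M, in normal form
    (φ : Dom n d → Fin d → ℝ)
    (hφan : ∀ᶠ p in 𝓝 (0 : Dom n d), AnalyticAt ℝ φ p)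
    (hφ0 : φ 0 = 0) (hdφ0 : fderiv ℝ φ 0 = 0)
    -- the extension of φ holomorphic in the last variable
    (φhat : Amb n d → Fin d → ℂ)
    (hφhat_real : ∀ᶠ p in 𝓝 (0 : Dom n d),
      φhat (p.1, fun k => (p.2 k : ℂ)) = fun k => ((φ p k : ℝ) : ℂ))
    (hφhat_hol : ∀ᶠ zw in 𝓝 (0 : Amb n d),
      DifferentiableAt ℂ (fun w => φhat (zw.1, w)) zw.2)
    -- the CR function h of class C¹
    (h : Dom n d → ℂ) (U : Set (Dom n d)) (hU : IsOpen U) (h0U : (0 : Dom n d) ∈ U)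
    (hhsm : ContDiffOn ℝ 1 h U)
    (hhCR : ∀ p ∈ U, ∀ j, Lambda φ j h p = 0)
    -- the open convex cone Γ
    (Γ : Set (Fin d → ℝ)) (hΓo : IsOpen Γ) (hΓconv : Convex ℝ Γ) (hΓne : Γ.Nonempty)
    (hΓcone : ∀ t ∈ Γ, ∀ c : ℝ, 0 < c → c • t ∈ Γ)
    -- h extends to the wedges W_Γ and W_{−Γ}
    (hup : ExtendsToWedge φ φhat Γ h)
    (hdown : ExtendsToWedge φ φhat {t | -t ∈ Γ} h) :
    -- conclusion: h extends holomorphically to a full neighborhood of 0 ∈ ℂᴺ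
    ∃ V : Set (Amb n d), IsOpen V ∧ (0 : Amb n d) ∈ V ∧
      ∃ G : Amb n d → ℂ, DifferentiableOn ℂ G V ∧
        ∀ᶠ p in 𝓝 (0 : Dom n d), G (iotaM φ p) = h p := by
  obtain ⟨r, hr, C, hC, hhol, hreal, hquad⟩ :=
    eow_phihat φ hφan.self_of_nhds hφ0 hdφ0 φhat hφhat_real hφhat_hol
  obtain ⟨εp, hεp, Fp, hFpd, hFpc, hFph⟩ := hup
  obtain ⟨εm, hεm, Fm, hFmd, hFmc, hFmh⟩ := hdown
  have hiota : ∀ z s, ‖z‖ < r → ‖s‖ < r → iotaM φ (z, s) =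
      ((z, (fun k => ((s k : ℝ) : ℂ)) + Complex.I • φhat (z, fun k => ((s k : ℝ) : ℂ))) : Amb n d) := by
    intro z s hz hs
    rw [hreal z s hz hs]
    rfl
  have hiota0 : iotaM φ 0 = 0 := by
    unfold iotaM
    rw [hφ0]
    ext k <;> simp
  have hreal' : ∀ w : Fin d → ℂ, (∀ j, (w j).im = 0) → (fun k => (((w k).re : ℝ) : ℂ)) = w := by
    intro w hw
    ext k
    apply Complex.ext <;> simp [hw k]
  -- local bounds
  obtain ⟨ρp, hρp, hbp⟩ := eow_bdd hFpc (Or.inr ⟨0, by simp [hεp], hiota0⟩)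
  obtain ⟨ρm, hρm, hbm⟩ := eow_bdd hFmc (Or.inr ⟨0, by simp [hεm], hiota0⟩)
  have hF0 : Fp 0 = Fm 0 := by
    rw [← hiota0, hFph 0 (by simpa using hεp) (by simpa using hεp),
      hFmh 0 (by simpa using hεm) (by simpa using hεm)]
  rw [← hF0] at hbm
  set B : ℝ := ‖Fp 0‖ + 1 with hBdef
  -- the radius
  obtain ⟨R, hR, hRr, hRp, hRm, hRρp, hRρm, hRC⟩ : ∃ R > 0, R ≤ r ∧ R ≤ εp ∧ R ≤ εm ∧
      2 * R ≤ ρp ∧ 2 * R ≤ ρm ∧ 64 * C * R ≤ 1 := by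
    refine ⟨min r (min εp (min εm (min (ρp / 2) (min (ρm / 2) (1 / (64 * C)))))), by positivity,
      ?_, ?_, ?_, ?_, ?_, ?_⟩
    · exact min_le_left _ _
    · exact (min_le_right _ _).trans (min_le_left _ _)
    · exact (min_le_right _ _).trans ((min_le_right _ _).trans (min_le_left _ _))
    · have : min r (min εp (min εm (min (ρp / 2) (min (ρm / 2) (1 / (64 * C)))))) ≤ ρp / 2 :=
        (min_le_right _ _).trans ((min_le_right _ _).trans ((min_le_right _ _).trans (min_le_left _ _)))
      linarith
    · have : min r (min εp (min εm (min (ρp / 2) (min (ρm / 2) (1 / (64 * C)))))) ≤ ρm / 2 :=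
        (min_le_right _ _).trans ((min_le_right _ _).trans ((min_le_right _ _).trans
          ((min_le_right _ _).trans (min_le_left _ _))))
      linarith
    · have : min r (min εp (min εm (min (ρp / 2) (min (ρm / 2) (1 / (64 * C)))))) ≤ 1 / (64 * C) :=
        (min_le_right _ _).trans ((min_le_right _ _).trans ((min_le_right _ _).trans
          ((min_le_right _ _).trans (min_le_right _ _))))
      calc 64 * C * _ ≤ 64 * C * (1 / (64 * C)) := by gcongr
        _ = 1 := by field_simp
  -- estimates on φhat
  have hlin : ∀ z w, ‖z‖ < R → ‖w‖ < R → ‖φhat (z, w)‖ ≤ 1 / 32 * (‖z‖ + ‖w‖) := by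
    intro z w hz hw
    refine (hquad z w (by linarith) (by linarith)).trans ?_
    have h1 : 0 ≤ ‖z‖ + ‖w‖ := by positivity
    have h2 : C * (‖z‖ + ‖w‖) ≤ 1 / 32 := by
      have : C * (‖z‖ + ‖w‖) ≤ C * (2 * R) := by gcongr; linarith
      linarith
    nlinarith
  have hIn : ∀ z w, ‖Complex.I • φhat (z, w)‖ = ‖φhat (z, w)‖ := by
    intro z w
    rw [norm_smul, Complex.norm_I, one_mul]
  have hΘd : ∀ z, ‖z‖ < R → DifferentiableOn ℂ (fun w => Complex.I • φhat (z, w)) (Metric.ball 0 R) := by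
    intro z hz w hw
    have := hhol z w (by linarith) (by linarith [mem_ball_zero_iff.1 hw])
    exact (this.const_smul Complex.I).differentiableWithinAt
  have hΘn : ∀ z w, ‖z‖ < R → ‖w‖ < R →
      ‖((z, w + Complex.I • φhat (z, w)) : Amb n d)‖ < 2 * R := by
    intro z w hz hw
    rw [Prod.norm_mk]
    refine max_lt (by linarith) ?_
    have h1 := norm_add_le w (Complex.I • φhat (z, w))
    rw [hIn] at h1
    have h2 := hlin z w hz hw
    linarith
  have hσex : ∀ z, ‖z‖ < R → ∃ σ : (Fin d → ℂ) → (Fin d → ℂ),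
      DifferentiableOn ℂ σ (Metric.ball 0 (R / 8)) ∧
      (∀ w ∈ Metric.ball (0 : Fin d → ℂ) (R / 8), ‖σ w‖ ≤ R / 4 ∧
        σ w + Complex.I • φhat (z, σ w) = w) ∧
      (∀ w ∈ Metric.ball (0 : Fin d → ℂ) (R / 2),
        w + Complex.I • φhat (z, w) ∈ Metric.ball (0 : Fin d → ℂ) (R / 8) →
        σ (w + Complex.I • φhat (z, w)) = w) := by
    intro z hz
    refine eow_inverse hR (le_refl (R / 16)) (hΘd z hz) fun w hw => ?_
    rw [hIn]
    have := hlin z w hz (mem_ball_zero_iff.1 hw)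
    linarith [mem_ball_zero_iff.1 hw]
  choose! σ hσd hσ hσl using hσex
  have hσn : ∀ z w, ‖z‖ < R → ‖w‖ < R / 8 → ‖σ z w‖ ≤ 2 * (‖z‖ + ‖w‖) ∧
      ‖σ z w - w‖ ≤ 9 * C * (‖z‖ + ‖w‖) ^ 2 := by
    intro z w hz hw
    obtain ⟨h1, h2⟩ := hσ z hz w (mem_ball_zero_iff.2 hw)
    have h3 := hlin z (σ z w) hz (by linarith)
    have h4 : σ z w - w = - (Complex.I • φhat (z, σ z w)) := by
      nth_rewrite 2 [← h2]
      abel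
    have h5 : ‖σ z w - w‖ = ‖φhat (z, σ z w)‖ := by rw [h4, norm_neg, hIn]
    have h6 := norm_add_le (σ z w - w) w
    rw [sub_add_cancel, h5] at h6
    have h7 : ‖σ z w‖ ≤ 2 * (‖z‖ + ‖w‖) := by linarith [norm_nonneg z, norm_nonneg w]
    refine ⟨h7, ?_⟩
    rw [h5]
    refine (hquad z _ (by linarith) (by linarith)).trans ?_
    have : ‖z‖ + ‖σ z w‖ ≤ 3 * (‖z‖ + ‖w‖) := by linarith [norm_nonneg w]
    calc C * (‖z‖ + ‖σ z w‖) ^ 2 ≤ C * (3 * (‖z‖ + ‖w‖)) ^ 2 := by gcongr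
      _ = _ := by ring
  -- the linear map
  obtain ⟨A, hAn, hAΓ, hAr⟩ := eow_cone hd hΓo hΓne hΓcone (a := R / 12) (by positivity)
  have hAn6 : ∀ w : Fin d → ℂ, ‖w‖ < 6 → ‖A w‖ < R := by
    intro w hw
    have := hAn w
    nlinarith
  have hAΓm : ∀ w : Fin d → ℂ, (∀ j, (w j).im < 0) → (fun k => (A w k).im) ∈ {t : Fin d → ℝ | -t ∈ Γ} := by
    intro w hw
    have := hAΓ (-w) fun j => by simpa using hw j
    rw [map_neg] at this
    exact this
  have hcomp : ∀ z, ‖z‖ < R → DifferentiableOn ℂ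
      (fun w => ((z, A w + Complex.I • φhat (z, A w)) : Amb n d)) {w : Fin d → ℂ | ‖w‖ < 6} := by
    intro z hz
    have h1 : DifferentiableOn ℂ (fun w => Complex.I • φhat (z, A w)) {w : Fin d → ℂ | ‖w‖ < 6} :=
      DifferentiableOn.comp (g := fun w => Complex.I • φhat (z, w)) (hΘd z hz) A.differentiable.differentiableOn
        fun w hw => mem_ball_zero_iff.2 (hAn6 w hw)
    exact (differentiableOn_const z).prodMk (A.differentiable.differentiableOn.add h1)
  have hmemp : ∀ z w, ‖z‖ < R → ‖w‖ < 6 → (∀ j, 0 < (w j).im) →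
      ((z, A w + Complex.I • φhat (z, A w)) : Amb n d) ∈ PsiW φhat '' WedgeSet Γ εp := by
    intro z w hz hw h
    exact eow_mem_wedge φhat (by linarith) (by linarith [hAn6 w hw]) (hAΓ w h)
  have hmemm : ∀ z w, ‖z‖ < R → ‖w‖ < 6 → (∀ j, (w j).im < 0) →
      ((z, A w + Complex.I • φhat (z, A w)) : Amb n d) ∈ PsiW φhat '' WedgeSet {t | -t ∈ Γ} εm := by
    intro z w hz hw h
    exact eow_mem_wedge φhat (by linarith) (by linarith [hAn6 w hw]) (hAΓm w h)
  have hmem0 : ∀ z w, ‖z‖ < R → ‖w‖ < 6 → (∀ j, (w j).im = 0) → ∃ s : Fin d → ℝ, ‖s‖ < R ∧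
      ((z, A w + Complex.I • φhat (z, A w)) : Amb n d) = iotaM φ (z, s) := by
    intro z w hz hw h
    have hs : ‖fun k => (A w k).re‖ < R := (eow_re_norm (A w)).trans_lt (hAn6 w hw)
    refine ⟨fun k => (A w k).re, hs, ?_⟩
    rw [hiota z _ (by linarith) (by linarith), hreal' (A w) ((hAr w).1 h)]
  have hgex : ∀ z : Fin n → ℂ, ‖z‖ < R → ∃ g : (Fin d → ℂ) → ℂ,
      DifferentiableOn ℂ g (Metric.ball 0 1) ∧
      (∀ w ∈ Metric.ball (0 : Fin d → ℂ) 1, ‖g w‖ ≤ B) ∧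
      (∀ w ∈ Metric.ball (0 : Fin d → ℂ) 1, (∀ j, (w j).im = 0) →
        g w = Fp (z, A w + Complex.I • φhat (z, A w))) ∧
      (∀ w ∈ Metric.ball (0 : Fin d → ℂ) 1, (∀ j, 0 < (w j).im) →
        g w = Fp (z, A w + Complex.I • φhat (z, A w))) := by
    intro z hz
    have hmp : ∀ w : Fin d → ℂ, ‖w‖ < 6 → ((∀ j, 0 < (w j).im) ∨ ∀ j, (w j).im = 0) →
        ((z, A w + Complex.I • φhat (z, A w)) : Amb n d) ∈ PsiW φhat '' WedgeSet Γ εp ∪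
          iotaM φ '' {p : Dom n d | ‖p.1‖ < εp ∧ ‖p.2‖ < εp} := by
      intro w hw h
      rcases h with h | h
      · exact Or.inl (hmemp z w hz hw h)
      · obtain ⟨s, hs, he⟩ := hmem0 z w hz hw h
        exact Or.inr ⟨(z, s), ⟨hz.trans_le hRp, hs.trans_le hRp⟩, he.symm⟩
    have hmm : ∀ w : Fin d → ℂ, ‖w‖ < 6 → ((∀ j, (w j).im < 0) ∨ ∀ j, (w j).im = 0) →
        ((z, A w + Complex.I • φhat (z, A w)) : Amb n d) ∈ PsiW φhat '' WedgeSet {t | -t ∈ Γ} εm ∪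
          iotaM φ '' {p : Dom n d | ‖p.1‖ < εm ∧ ‖p.2‖ < εm} := by
      intro w hw h
      rcases h with h | h
      · exact Or.inl (hmemm z w hz hw h)
      · obtain ⟨s, hs, he⟩ := hmem0 z w hz hw h
        exact Or.inr ⟨(z, s), ⟨hz.trans_le hRm, hs.trans_le hRm⟩, he.symm⟩
    refine eow_flat2 hd (p := fun w => Fp (z, A w + Complex.I • φhat (z, A w)))
      (m := fun w => Fm (z, A w + Complex.I • φhat (z, A w))) ?_ ?_ ?_ ?_ ?_ ?_ ?_
    · exact hFpc.comp ((hcomp z hz).continuousOn.mono fun w hw => hw.1) fun w hw => hmp w hw.1 hw.2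
    · exact hFmc.comp ((hcomp z hz).continuousOn.mono fun w hw => hw.1) fun w hw => hmm w hw.1 hw.2
    · exact hFpd.comp ((hcomp z hz).mono fun w hw => hw.1) fun w hw => hmemp z w hz hw.1 hw.2
    · exact hFmd.comp ((hcomp z hz).mono fun w hw => hw.1) fun w hw => hmemm z w hz hw.1 hw.2
    · intro w hw h
      obtain ⟨s, hs, he⟩ := hmem0 z w hz hw h
      simp only [he]
      rw [hFph (z, s) (hz.trans_le hRp) (hs.trans_le hRp),
        hFmh (z, s) (hz.trans_le hRm) (hs.trans_le hRm)]
    · intro w hw h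
      exact hbp _ (hmp w hw h) ((hΘn z (A w) hz (hAn6 w hw)).trans_le hRρp)
    · intro w hw h
      exact hbm _ (hmm w hw (Or.inl h)) ((hΘn z (A w) hz (hAn6 w hw)).trans_le hRρm)
  choose! g hgd hgB hg0 hgp using hgex
  -- the extension
  let G : Amb n d → ℂ := fun q => g q.1 (A.symm (σ q.1 q.2))
  set a' : ℝ := ‖(A.symm : (Fin d → ℂ) →L[ℂ] (Fin d → ℂ))‖ + 1 with ha'
  have ha'0 : 0 < a' := by positivity
  have hAs : ∀ w, ‖A.symm w‖ ≤ a' * ‖w‖ := by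
    intro w
    have h1 := (A.symm : (Fin d → ℂ) →L[ℂ] (Fin d → ℂ)).le_opNorm w
    rw [ContinuousLinearEquiv.coe_coe] at h1
    rw [ha']
    linarith [norm_nonneg w]
  obtain ⟨ρ, hρ, hρR, hρa⟩ : ∃ ρ > 0, ρ ≤ R / 16 ∧ 4 * a' * ρ ≤ 1 := by
    refine ⟨min (R / 16) (1 / (4 * a')), by positivity, min_le_left _ _, ?_⟩
    calc 4 * a' * min (R / 16) (1 / (4 * a')) ≤ 4 * a' * (1 / (4 * a')) := by
          gcongr; exact min_le_right _ _
      _ = 1 := by field_simp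
  have hin1 : ∀ z w, ‖z‖ < ρ → ‖w‖ < ρ → A.symm (σ z w) ∈ Metric.ball (0 : Fin d → ℂ) 1 := by
    intro z w hz hw
    rw [mem_ball_zero_iff]
    have h1 := (hσn z w (by linarith) (by linarith)).1
    have h2 : a' * ‖σ z w‖ < a' * (4 * ρ) := by gcongr; linarith
    linarith [hAs (σ z w)]
  have hG1 : ∀ z, ‖z‖ < ρ → DifferentiableOn ℂ (fun w => G (z, w)) (Metric.ball 0 ρ) := by
    intro z hz
    refine DifferentiableOn.comp (g := g z) (f := fun w => A.symm (σ z w)) (hgd z (by linarith)) ?_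
      fun w hw => hin1 z w hz (mem_ball_zero_iff.1 hw)
    exact A.symm.differentiable.comp_differentiableOn
      ((hσd z (by linarith)).mono (Metric.ball_subset_ball (by linarith)))
  have hG2 : ∀ z w, ‖z‖ < ρ → ‖w‖ < ρ → ‖G (z, w)‖ ≤ B := fun z w hz hw =>
    hgB z (by linarith) _ (hin1 z w hz hw)
  -- the base point
  obtain ⟨μ, hμ, hμ1, hμ2, hμ3⟩ : ∃ μ > 0, μ ≤ 1 ∧ μ * R ≤ ρ ∧
      a' * (9 * C * (1 + (1 + R)) ^ 2) * μ ≤ 1 / 2 := by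
    set D : ℝ := a' * (9 * C * (1 + (1 + R)) ^ 2) with hD
    have hD0 : 0 < D := by positivity
    refine ⟨min 1 (min (ρ / R) (1 / (2 * D))), by positivity, min_le_left _ _, ?_, ?_⟩
    · calc _ ≤ (ρ / R) * R := by gcongr; exact (min_le_right _ _).trans (min_le_left _ _)
        _ = ρ := by field_simp
    · calc _ ≤ D * (1 / (2 * D)) := by gcongr; exact (min_le_right _ _).trans (min_le_right _ _)
        _ = 1 / 2 := by field_simp
  let e : Fin d → ℂ := fun _ => (μ : ℂ) * Complex.I
  have hen : ‖e‖ ≤ μ := by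
    rw [pi_norm_le_iff_of_nonneg hμ.le]
    intro j
    simp [e, abs_of_pos hμ]
  set w0 : Fin d → ℂ := A e with hw0
  have hw0n : ‖w0‖ ≤ μ * R / 12 := by
    have := hAn e
    nlinarith
  set δ : ℝ := ρ / 5 with hδ
  have hδ0 : 0 < δ := by positivity
  have hw0δ : ‖w0‖ < δ := by linarith
  obtain ⟨η, hη, hηρ, hημ, hηa⟩ : ∃ η > 0, η ≤ ρ / 5 ∧ η ≤ μ ∧ a' * η < μ / 2 := by
    refine ⟨min (ρ / 5) (min μ (μ / (4 * a'))), by positivity, min_le_left _ _,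
      (min_le_right _ _).trans (min_le_left _ _), ?_⟩
    calc _ ≤ a' * (μ / (4 * a')) := by
          gcongr; exact (min_le_right _ _).trans (min_le_right _ _)
      _ = μ / 4 := by field_simp
      _ < μ / 2 := by linarith
  have hbase : ∀ z w, ‖z‖ < η → ‖w - w0‖ < η → ‖w‖ < ρ ∧ ∀ j, 0 < (A.symm (σ z w) j).im := by
    intro z w hz hw
    have hwn : ‖w‖ ≤ ‖w - w0‖ + ‖w0‖ := by
      have := norm_add_le (w - w0) w0
      rwa [sub_add_cancel] at this
    have hwρ : ‖w‖ < ρ := by linarith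
    refine ⟨hwρ, fun j => ?_⟩
    have h1 := (hσn z w (by linarith) (by linarith)).2
    have h2 : ‖z‖ + ‖w‖ ≤ μ * (1 + (1 + R)) := by nlinarith
    have h3 : ‖σ z w - w‖ ≤ 9 * C * (1 + (1 + R)) ^ 2 * μ * μ := by
      refine h1.trans ?_
      calc _ ≤ 9 * C * (μ * (1 + (1 + R))) ^ 2 := by gcongr
        _ = _ := by ring
    have h4 : ‖σ z w - w0‖ < 9 * C * (1 + (1 + R)) ^ 2 * μ * μ + η := by
      have := norm_add_le (σ z w - w) (w - w0)
      rw [sub_add_sub_cancel] at this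
      linarith
    have h5 : A.symm (σ z w) - e = A.symm (σ z w - w0) := by
      rw [map_sub, hw0, ContinuousLinearEquiv.symm_apply_apply]
    have h6 : ‖A.symm (σ z w) - e‖ < μ := by
      rw [h5]
      refine (hAs _).trans_lt ?_
      calc a' * ‖σ z w - w0‖ ≤ a' * (9 * C * (1 + (1 + R)) ^ 2 * μ * μ + η) := by gcongr
        _ = (a' * (9 * C * (1 + (1 + R)) ^ 2) * μ) * μ + a' * η := by ring
        _ ≤ 1 / 2 * μ + a' * η := by gcongr
        _ < μ := by linarith
    have h7 := (norm_le_pi_norm (A.symm (σ z w) - e) j).trans_lt h6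
    have h8 := (Complex.abs_im_le_norm ((A.symm (σ z w) - e) j)).trans_lt h7
    have h9 : ((A.symm (σ z w) - e) j).im = (A.symm (σ z w) j).im - μ := by
      simp [e]
    rw [h9, abs_lt] at h8
    linarith [h8.1]
  have hGF : ∀ z w, ‖z‖ < η → ‖w - w0‖ < η → G (z, w) = Fp (z, w) ∧
      ((z, w) : Amb n d) ∈ PsiW φhat '' WedgeSet Γ εp := by
    intro z w hz hw
    obtain ⟨h1, h2⟩ := hbase z w hz hw
    have h3 := hin1 z w (by linarith) h1
    have h4 := hgp z (by linarith) _ h3 h2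
    have h5 := hmemp z _ (by linarith) (by linarith [mem_ball_zero_iff.1 h3]) h2
    rw [ContinuousLinearEquiv.apply_symm_apply,
      (hσ z (by linarith) w (mem_ball_zero_iff.2 (by linarith))).2] at h4 h5
    exact ⟨h4, h5⟩
  have hG3 : DifferentiableOn ℂ G (Metric.ball 0 η ×ˢ Metric.ball w0 η) := by
    have h1 : ∀ q ∈ Metric.ball (0 : Fin n → ℂ) η ×ˢ Metric.ball w0 η, ‖q.1‖ < η ∧ ‖q.2 - w0‖ < η := by
      intro q hq
      exact ⟨mem_ball_zero_iff.1 hq.1, by rw [← dist_eq_norm]; exact hq.2⟩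
    refine DifferentiableOn.congr (f := Fp) (hFpd.mono fun q hq => ?_) fun q hq => ?_
    · exact (hGF q.1 q.2 (h1 q hq).1 (h1 q hq).2).2
    · exact (hGF q.1 q.2 (h1 q hq).1 (h1 q hq).2).1
  have hball : Metric.ball w0 (4 * δ) ⊆ Metric.ball 0 ρ := by
    apply Metric.ball_subset_ball'
    rw [dist_zero_right]
    linarith
  have hG := eow_hartogs (G := G) (w0 := w0) hδ0 hη
    (fun z hz => (hG1 z (by linarith [mem_ball_zero_iff.1 hz])).mono hball)
    (fun z hz w hw => hG2 z w (by linarith [mem_ball_zero_iff.1 hz]) (mem_ball_zero_iff.1 (hball hw)))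
    hG3
  refine ⟨_, Metric.isOpen_ball.prod Metric.isOpen_ball, ?_, G, hG, ?_⟩
  · refine ⟨Metric.mem_ball_self hη, ?_⟩
    show (0 : Fin d → ℂ) ∈ Metric.ball w0 δ
    rw [Metric.mem_ball, dist_comm, dist_zero_right]
    exact hw0δ
  · filter_upwards [Metric.ball_mem_nhds (0 : Dom n d) (show 0 < ρ by positivity)] with p hp
    obtain ⟨z, s⟩ := p
    rw [mem_ball_zero_iff, Prod.norm_mk, max_lt_iff] at hp
    obtain ⟨hz, hs⟩ := hp
    rw [hiota z s (by linarith) (by linarith)]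
    set w : Fin d → ℂ := fun k => ((s k : ℝ) : ℂ) with hw
    have hwn : ‖w‖ < ρ := (eow_ofReal_norm s).trans_lt hs
    have hΘ : ‖w + Complex.I • φhat (z, w)‖ < R / 8 := by
      have h1 := norm_add_le w (Complex.I • φhat (z, w))
      rw [hIn] at h1
      have h2 := hlin z w (by linarith) (by linarith)
      linarith
    have hσw := hσl z (by linarith) w (mem_ball_zero_iff.2 (by linarith)) (mem_ball_zero_iff.2 hΘ)
    show g z (A.symm (σ z (w + Complex.I • φhat (z, w)))) = h (z, s)
    rw [hσw]
    have hn1 : A.symm w ∈ Metric.ball (0 : Fin d → ℂ) 1 := by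
      rw [mem_ball_zero_iff]
      have h2 : a' * ‖w‖ < a' * ρ := by gcongr
      nlinarith [hAs w]
    rw [hg0 z (by linarith) _ hn1, ContinuousLinearEquiv.apply_symm_apply, hw,
      ← hiota z s (by linarith) (by linarith), hFph (z, s) (by show ‖z‖ < εp; linarith) (by show ‖s‖ < εp; linarith)]
    rw [hAr, ContinuousLinearEquiv.apply_symm_apply]
    intro k
    simp [hw]
end
end

section
/- Let H : M → M' be a CR map of class C^{k₀} that is k₀-nondegenerate at 0, and let K be the cardinality of {β ∈ ℕⁿ : 1 ≤ |β| ≤ k₀}. Then there exist holomorphic functions Υ₁,…,Υ_{N'}, defined on a neighborhood of the point (0, (Λ^β H̄(0))_{1 ≤ |β| ≤ k₀}) in ℂ^{N'} × (ℂ^{N'})^K, such that near 0 on M: Hⱼ(z,s) = Υⱼ( H̄(z,s), (Λ^β H̄(z,s))_{1 ≤ |β| ≤ k₀} ) for j = 1,…,N', where H̄ = (conj H₁,…,conj H_{N'}). -/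
open Complex Topology Filter

noncomputable section

lemma complexify_pi {ι : Type} [Fintype ι] [DecidableEq ι] (f : (ι → ℝ) → ℂ)
    (hf : AnalyticAt ℝ f 0) :
    ∃ R : (ι → ℂ) → ℂ, AnalyticAt ℂ R 0 ∧
      ∀ᶠ x in 𝓝 (0 : ι → ℝ), R (fun i => (x i : ℂ)) = f x := by
  obtain ⟨p, r, hp⟩ := hf
  let q : FormalMultilinearSeries ℂ (ι → ℂ) ℂ := fun n =>
    ∑ c : Fin n → ι, p n (fun i => Pi.single (c i) 1) •
      (ContinuousMultilinearMap.mkPiAlgebra ℂ (Fin n) ℂ).compContinuousLinearMap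
        (fun i => ContinuousLinearMap.proj (R := ℂ) (φ := fun _ : ι => ℂ) (c i))
  have hqapp : ∀ n (x : ι → ℂ), q n (fun _ => x) =
      ∑ c : Fin n → ι, p n (fun i => Pi.single (c i) 1) * ∏ i, x (c i) := by
    intro n x
    simp [q]
  have hqp : ∀ n (x : ι → ℝ), q n (fun _ => fun i => (x i : ℂ)) = p n (fun _ => x) := by
    intro n x
    rw [hqapp]
    have hx : x = ∑ i, x i • (Pi.single i 1 : ι → ℝ) := by
      ext j; simp [Finset.sum_apply, Pi.single_apply]
    conv_rhs => rw [hx]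
    rw [ContinuousMultilinearMap.map_sum (p n) (fun _ i => x i • (Pi.single i 1 : ι → ℝ))]
    refine Finset.sum_congr rfl fun c _ => ?_
    rw [ContinuousMultilinearMap.map_smul_univ (p n) (fun i => x (c i))
      (fun i => (Pi.single (c i) 1 : ι → ℝ))]
    rw [mul_comm, Complex.real_smul]
    push_cast
    rfl
  have hqn : ∀ n, ‖q n‖ ≤ (Fintype.card ι : ℝ) ^ n * ‖p n‖ := by
    intro n
    refine (norm_sum_le _ _).trans ?_
    refine (Finset.sum_le_card_nsmul _ _ ‖p n‖ ?_).trans ?_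
    · intro c _
      rw [norm_smul]
      have h1 : ‖p n (fun i => Pi.single (c i) 1)‖ ≤ ‖p n‖ := by
        refine ((p n).le_opNorm _).trans ?_
        have : ∏ i, ‖(Pi.single (c i) 1 : ι → ℝ)‖ ≤ 1 := by
          refine Finset.prod_le_one (fun _ _ => norm_nonneg _) fun i _ => ?_
          refine (pi_norm_le_iff_of_nonneg zero_le_one).2 fun j => ?_
          by_cases h : j = c i
          · subst h; simp
          · simp [h]
        exact mul_le_of_le_one_right (norm_nonneg _) this
      have h2 : ‖(ContinuousMultilinearMap.mkPiAlgebra ℂ (Fin n) ℂ).compContinuousLinearMap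
        (fun i => ContinuousLinearMap.proj (R := ℂ) (φ := fun _ : ι => ℂ) (c i))‖ ≤ 1 := by
        refine ContinuousMultilinearMap.opNorm_le_bound zero_le_one fun m => ?_
        simp only [ContinuousMultilinearMap.compContinuousLinearMap_apply, ContinuousMultilinearMap.mkPiAlgebra_apply, norm_prod, one_mul]
        exact Finset.prod_le_prod (fun _ _ => norm_nonneg _) fun i _ => norm_le_pi_norm (m i) (c i)
      calc _ ≤ ‖p n‖ * 1 := by gcongr
        _ = _ := mul_one _
    · simp
  have hqr : 0 < q.radius := by
    have hpr : 0 < p.radius := hp.r_pos.trans_le hp.r_le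
    obtain ⟨s, hs0, hs⟩ := ENNReal.lt_iff_exists_nnreal_btwn.1 hpr
    obtain ⟨C, hC, hCb⟩ := p.norm_mul_pow_le_of_lt_radius hs
    have hs0' : 0 < s := by exact_mod_cast hs0
    have : ((s / (Fintype.card ι + 1) : NNReal) : ENNReal) ≤ q.radius := by
      refine q.le_radius_of_bound C fun n => ?_
      refine le_trans ?_ (hCb n)
      push_cast
      rw [div_pow]
      calc ‖q n‖ * ((s:ℝ) ^ n / ((Fintype.card ι : ℝ) + 1) ^ n) ≤ ((Fintype.card ι : ℝ) ^ n * ‖p n‖) * ((s:ℝ) ^ n / ((Fintype.card ι : ℝ) + 1) ^ n) := by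
            gcongr; exact hqn n
        _ = (‖p n‖ * s ^ n) * ((Fintype.card ι : ℝ) ^ n / ((Fintype.card ι : ℝ) + 1) ^ n) := by ring
        _ ≤ (‖p n‖ * s ^ n) * 1 := by
            gcongr
            apply div_le_one_of_le₀
            · gcongr; linarith
            · positivity
        _ = _ := mul_one _
    refine lt_of_lt_of_le ?_ this
    have : 0 < s / ((Fintype.card ι : NNReal) + 1) := by positivity
    exact_mod_cast this
  refine ⟨q.sum, (q.hasFPowerSeriesOnBall hqr).analyticAt, ?_⟩
  filter_upwards [hp.hasFPowerSeriesAt.eventually_hasSum] with x hx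
  rw [FormalMultilinearSeries.sum]
  simp_rw [hqp]
  simpa using hx.tsum_eq

/-- polarization -/
lemma complexify {N : ℕ} (r : (Fin N → ℂ) → ℝ) (hr : AnalyticAt ℝ r 0) :
    ∃ R : (Fin N → ℂ) × (Fin N → ℂ) → ℂ, AnalyticAt ℂ R 0 ∧
      ∀ᶠ Z in 𝓝 (0 : Fin N → ℂ), R (Z, fun m => (starRingEnd ℂ) (Z m)) = (r Z : ℂ) := by
  let A : ((Fin N ⊕ Fin N) → ℝ) →L[ℝ] (Fin N → ℂ) :=
    ContinuousLinearMap.pi fun m =>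
      Complex.ofRealCLM.comp (ContinuousLinearMap.proj (Sum.inl m)) +
      (Complex.I) • Complex.ofRealCLM.comp (ContinuousLinearMap.proj (Sum.inr m))
  obtain ⟨R, hR, hRe⟩ := complexify_pi (ι := Fin N ⊕ Fin N) (fun x => (r (A x) : ℂ)) (by
    have h1 : AnalyticAt ℝ A 0 := A.analyticAt 0
    have h2 : AnalyticAt ℝ r (A 0) := by simpa using hr
    have h3 := h2.comp h1
    exact (Complex.ofRealCLM.analyticAt _).comp h3)
  let B : (Fin N → ℂ) × (Fin N → ℂ) →L[ℂ] ((Fin N ⊕ Fin N) → ℂ) :=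
    ContinuousLinearMap.pi (Sum.elim
      (fun m => (1/2 : ℂ) • ((ContinuousLinearMap.proj m).comp (ContinuousLinearMap.fst ℂ _ _) +
        (ContinuousLinearMap.proj m).comp (ContinuousLinearMap.snd ℂ _ _)))
      (fun m => (-Complex.I/2 : ℂ) • ((ContinuousLinearMap.proj m).comp (ContinuousLinearMap.fst ℂ _ _) -
        (ContinuousLinearMap.proj m).comp (ContinuousLinearMap.snd ℂ _ _))))
  refine ⟨fun q => R (B q), ?_, ?_⟩
  · have h1 : AnalyticAt ℂ B 0 := B.analyticAt 0
    have h2 : AnalyticAt ℂ R (B 0) := by simpa using hR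
    exact h2.comp h1
  · let T : (Fin N → ℂ) → ((Fin N ⊕ Fin N) → ℝ) := fun Z => Sum.elim (fun m => (Z m).re) (fun m => (Z m).im)
    have hT : Tendsto T (𝓝 0) (𝓝 0) := by
      have : Continuous T := by
        refine continuous_pi fun i => ?_
        rcases i with i | i
        · exact Complex.continuous_re.comp (continuous_apply i)
        · exact Complex.continuous_im.comp (continuous_apply i)
      have h0 : T 0 = 0 := by ext i; rcases i with i | i <;> simp [T]
      simpa [h0] using this.tendsto 0
    filter_upwards [hT.eventually hRe] with Z hZ
    have h1 : A (T Z) = Z := by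
      ext m
      simp [A, T, mul_comm Complex.I, Complex.re_add_im]
    have h2 : B (Z, fun m => (starRingEnd ℂ) (Z m)) = fun i => ((T Z i : ℝ) : ℂ) := by
      ext i
      rcases i with i | i
      · simp [B, T]; apply Complex.ext <;> simp <;> ring
      · simp [B, T]; apply Complex.ext <;> simp <;> ring
    rw [h2, hZ, h1]

lemma implicit_holo {N : ℕ} {X : Type} [NormedAddCommGroup X] [NormedSpace ℂ X]
    [FiniteDimensional ℂ X] (F : (Fin N → ℂ) × X → (Fin N → ℂ)) (a : Fin N → ℂ) (x₀ : X)
    (hF : AnalyticAt ℂ F (a, x₀)) (hF0 : F (a, x₀) = 0)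
    (hinj : ∀ v, fderiv ℂ F (a, x₀) (v, 0) = 0 → v = 0) :
    ∃ (V : Set X) (Υ : X → (Fin N → ℂ)), IsOpen V ∧ x₀ ∈ V ∧ DifferentiableOn ℂ Υ V ∧
      ∀ᶠ q in 𝓝 (a, x₀), F q = 0 → q.1 = Υ q.2 := by
  have : CompleteSpace X := FiniteDimensional.complete ℂ X
  let Φ : (Fin N → ℂ) × X → (Fin N → ℂ) × X := fun q => (F q, q.2)
  have hΦ : ContDiffAt ℂ 1 Φ (a, x₀) := hF.contDiffAt.prodMk contDiffAt_snd
  let L : ((Fin N → ℂ) × X) →L[ℂ] ((Fin N → ℂ) × X) :=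
    (fderiv ℂ F (a, x₀)).prod (ContinuousLinearMap.snd ℂ _ _)
  have hL : HasFDerivAt Φ L (a, x₀) := hF.differentiableAt.hasFDerivAt.prodMk hasFDerivAt_snd
  have hLinj : Function.Injective L := by
    rw [injective_iff_map_eq_zero]
    rintro ⟨v, x⟩ h
    have h2 : x = 0 := congrArg Prod.snd h
    subst h2
    have h1 : fderiv ℂ F (a, x₀) (v, 0) = 0 := congrArg Prod.fst h
    rw [hinj v h1]; rfl
  let e : ((Fin N → ℂ) × X) ≃L[ℂ] ((Fin N → ℂ) × X) :=
    (LinearEquiv.ofInjectiveEndo L.toLinearMap hLinj).toContinuousLinearEquiv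
  have he : (e : ((Fin N → ℂ) × X) →L[ℂ] ((Fin N → ℂ) × X)) = L := by
    ext1 <;> rfl
  rw [← he] at hL
  have hinv := hΦ.to_localInverse hL one_ne_zero
  have hΦ0 : Φ (a, x₀) = (0, x₀) := by simp [Φ, hF0]
  have hleft : ∀ᶠ q in 𝓝 (a, x₀), hΦ.localInverse hL one_ne_zero (Φ q) = q :=
    (hΦ.hasStrictFDerivAt' hL one_ne_zero).eventually_left_inverse
  rw [hΦ0] at hinv
  let Υ : X → (Fin N → ℂ) := fun x => (hΦ.localInverse hL one_ne_zero (0, x)).1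
  have hU : ContDiffAt ℂ 1 Υ x₀ := by
    have h1 : ContDiffAt ℂ 1 (fun x : X => ((0 : Fin N → ℂ), x)) x₀ :=
      contDiffAt_const.prodMk contDiffAt_id
    exact contDiffAt_fst.comp x₀ (ContDiffAt.comp x₀ hinv h1)
  have hev : ∀ᶠ x in 𝓝 x₀, DifferentiableAt ℂ Υ x := by
    filter_upwards [hU.eventually (by simp)] with x hx using hx.differentiableAt one_ne_zero
  obtain ⟨V, hV, hVo, hxV⟩ := eventually_nhds_iff.1 hev
  refine ⟨V, Υ, hVo, hxV, fun x hx => (hV x hx).differentiableWithinAt, ?_⟩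
  filter_upwards [hleft] with q hq hFq
  have : Φ q = (0, q.2) := by simp [Φ, hFq]
  rw [this] at hq
  simp only [Υ, hq]

/-- words -/
def wordOf {n : ℕ} (β : Fin n → ℕ) : List (Fin n) :=
  (List.finRange n).flatMap fun j => List.replicate (β j) j

lemma wordOf_length {n : ℕ} (β : Fin n → ℕ) : (wordOf β).length = ∑ j, β j := by
  simp [wordOf, List.length_flatMap, Fin.sum_univ_def]

lemma sublist_words {n : ℕ} (β : Fin n → ℕ) : ∀ (L : List (Fin n)), L.Nodup → ∀ u,
    List.Sublist u (L.flatMap fun j => List.replicate (β j) j) →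
    ∃ γ : Fin n → ℕ, u = L.flatMap fun j => List.replicate (γ j) j := by
  intro L
  induction L with
  | nil => intro _ u hu; exact ⟨0, by simpa using hu⟩
  | cons a L ih =>
    intro hL u hu
    rw [List.flatMap_cons, List.sublist_append_iff] at hu
    obtain ⟨u1, u2, rfl, h1, h2⟩ := hu
    obtain ⟨γ, rfl⟩ := ih (List.nodup_cons.1 hL).2 u2 h2
    obtain ⟨k, hk, rfl⟩ := List.sublist_replicate_iff.1 h1
    refine ⟨Function.update γ a k, ?_⟩
    rw [List.flatMap_cons]
    congr 1
    · simp
    · apply List.flatMap_congr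
      intro j hj
      have : j ≠ a := fun h => (List.nodup_cons.1 hL).1 (h ▸ hj)
      simp [this]

lemma sublist_wordOf {n : ℕ} (β : Fin n → ℕ) (u : List (Fin n)) (hu : List.Sublist u (wordOf β)) :
    ∃ γ : Fin n → ℕ, u = wordOf γ :=
  sublist_words β _ (List.nodup_finRange n) u hu


/-- vector valued version of `Lambda` -/
def lamV {n d : ℕ} {Y : Type} [NormedAddCommGroup Y] [NormedSpace ℂ Y]
    (φ : Dom n d → Fin d → ℝ) (j : Fin n) (g : Dom n d → Y) (p : Dom n d) : Y :=
  (1 / 2 : ℂ) • (fderiv ℝ g p (Pi.single j 1, 0) +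
    Complex.I • fderiv ℝ g p (Pi.single j Complex.I, 0)) - Complex.I •
    ∑ l, (∑ k, dzbar j (fun q => ((φ q k : ℝ) : ℂ)) p * (phiMat φ p)⁻¹ k l) •
      fderiv ℝ g p (0, Pi.single l 1)

lemma Lambda_eq_lamV {n d : ℕ} (φ : Dom n d → Fin d → ℝ) (j : Fin n) (f : Dom n d → ℂ)
    (p : Dom n d) : Lambda φ j f p = lamV φ j f p := rfl

lemma lamV_comp {n d : ℕ} {Y Y' : Type} [NormedAddCommGroup Y] [NormedSpace ℂ Y]
    [NormedAddCommGroup Y'] [NormedSpace ℂ Y']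
    (φ : Dom n d → Fin d → ℝ) (j : Fin n) (g : Dom n d → Y) (P : Y → Y') (p : Dom n d)
    (hg : DifferentiableAt ℝ g p) (hP : DifferentiableAt ℂ P (g p)) :
    lamV φ j (fun q => P (g q)) p = fderiv ℂ P (g p) (lamV φ j g p) := by
  have h : ∀ v, fderiv ℝ (fun q => P (g q)) p v = fderiv ℂ P (g p) (fderiv ℝ g p v) := by
    intro v
    have h1 : HasFDerivAt P ((fderiv ℂ P (g p)).restrictScalars ℝ) (g p) :=
      hP.hasFDerivAt.restrictScalars ℝ
    have h2 := h1.comp p hg.hasFDerivAt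
    have h3 : fderiv ℝ (fun q => P (g q)) p = _ := h2.fderiv
    rw [h3]; rfl
  simp only [lamV, h, map_sub, map_smul, map_add, map_sum]

lemma lamV_congr {n d : ℕ} {Y : Type} [NormedAddCommGroup Y] [NormedSpace ℂ Y]
    (φ : Dom n d → Fin d → ℝ) (j : Fin n) {f g : Dom n d → Y} {p : Dom n d}
    (h : f =ᶠ[𝓝 p] g) : lamV φ j f p = lamV φ j g p := by
  simp only [lamV, h.fderiv_eq]

lemma Lambda_congr {n d : ℕ} (φ : Dom n d → Fin d → ℝ) (j : Fin n) {f g : Dom n d → ℂ}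
    {x : Dom n d} (h : f =ᶠ[𝓝 x] g) : Lambda φ j f =ᶠ[𝓝 x] Lambda φ j g := by
  filter_upwards [h.eventually_nhds] with p hp using lamV_congr φ j hp

/-- iterated along a word -/
def lamW {n d : ℕ} (φ : Dom n d → Fin d → ℝ) (w : List (Fin n)) (f : Dom n d → ℂ) :
    Dom n d → ℂ := w.foldr (Lambda φ) f

lemma lamW_cons {n d : ℕ} (φ : Dom n d → Fin d → ℝ) (j : Fin n) (w : List (Fin n))
    (f : Dom n d → ℂ) : lamW φ (j :: w) f = Lambda φ j (lamW φ w f) := rfl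

lemma lamW_zero_ev {n d : ℕ} (φ : Dom n d → Fin d → ℝ) (f : Dom n d → ℂ)
    (hf : f =ᶠ[𝓝 0] fun _ => 0) (w : List (Fin n)) : lamW φ w f =ᶠ[𝓝 0] fun _ => 0 := by
  induction w with
  | nil => exact hf
  | cons j w ih =>
    rw [lamW_cons]
    refine (Lambda_congr φ j ih).trans (Eventually.of_forall fun p => ?_)
    simp [Lambda, dzbar, dS]

lemma LambdaPow_eq {n d : ℕ} (φ : Dom n d → Fin d → ℝ) (α : Fin n → ℕ) (f : Dom n d → ℂ) :
    LambdaPow φ α f = lamW φ (wordOf α) f := by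
  unfold LambdaPow lamW wordOf
  generalize List.finRange n = L
  induction L with
  | nil => rfl
  | cons a L ih =>
    rw [List.map_cons, List.foldr_cons, Function.comp_apply, ih, List.flatMap_cons,
      List.foldr_append]
    generalize List.foldr (Lambda φ) f _ = g
    induction (α a) with
    | zero => rfl
    | succ k ih2 => rw [Function.iterate_succ_apply', ih2, List.replicate_succ, List.foldr_cons]

section reg
variable {n d : ℕ} (φ : Dom n d → Fin d → ℝ)

lemma contDiffAt_fderiv_apply {E F : Type} [NormedAddCommGroup E] [NormedSpace ℝ E]
    [NormedAddCommGroup F] [NormedSpace ℝ F] {f : E → F} {x : E} {k : ℕ}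
    (hf : ContDiffAt ℝ ((k + 1 : ℕ) : WithTop ℕ∞) f x) (v : E) :
    ContDiffAt ℝ (k : WithTop ℕ∞) (fun p => fderiv ℝ f p v) x := by
  have h := hf.fderiv_right (m := (k : WithTop ℕ∞)) (by push_cast; exact le_rfl)
  exact h.clm_apply contDiffAt_const

lemma contDiffAt_phiMat (hφ : AnalyticAt ℝ φ 0) (k : ℕ) (a b : Fin d) :
    ContDiffAt ℝ (k : WithTop ℕ∞) (fun p => phiMat φ p a b) 0 := by
  unfold phiMat
  have h1 := contDiffAt_fderiv_apply (k := k) hφ.contDiffAt (0, Pi.single b 1)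
  have h2 := (contDiffAt_pi.1 h1) a
  have h3 : ContDiffAt ℝ (k : WithTop ℕ∞)
      (fun p => ((fderiv ℝ φ p (0, Pi.single b 1) a : ℝ) : ℂ)) 0 :=
    Complex.ofRealCLM.contDiff.contDiffAt.comp 0 h2
  exact contDiffAt_const.add (contDiffAt_const.mul h3)

lemma contDiffAt_det {E : Type} [NormedAddCommGroup E] [NormedSpace ℝ E] {m : ℕ}
    (A : E → Matrix (Fin m) (Fin m) ℂ) (x : E) (k : ℕ)
    (hA : ∀ a b, ContDiffAt ℝ (k : WithTop ℕ∞) (fun p => A p a b) x) :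
    ContDiffAt ℝ (k : WithTop ℕ∞) (fun p => (A p).det) x := by
  simp only [Matrix.det_apply']
  refine ContDiffAt.sum fun σ _ => contDiffAt_const.mul ?_
  exact contDiffAt_prod fun i _ => hA _ _

lemma contDiffAt_inv_phiMat (hφ : AnalyticAt ℝ φ 0) (hdφ0 : fderiv ℝ φ 0 = 0) (k : ℕ)
    (a b : Fin d) :
    ContDiffAt ℝ (k : WithTop ℕ∞) (fun p => (phiMat φ p)⁻¹ a b) 0 := by
  have hA := contDiffAt_phiMat φ hφ k
  have hdet := contDiffAt_det (phiMat φ) 0 k hA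
  have h0 : (phiMat φ 0).det = 1 := by
    have : phiMat φ 0 = 1 := by
      ext a b
      simp [phiMat, hdφ0, Matrix.one_apply]
    rw [this, Matrix.det_one]
  have hadj : ContDiffAt ℝ (k : WithTop ℕ∞) (fun p => (phiMat φ p).adjugate a b) 0 := by
    simp only [Matrix.adjugate_apply]
    refine contDiffAt_det _ 0 k fun c e => ?_
    by_cases h : c = b
    · subst h
      simpa using contDiffAt_const
    · simpa [Matrix.updateRow_apply, h] using hA c e
  simp only [Matrix.inv_def, Ring.inverse_eq_inv', Matrix.smul_apply, smul_eq_mul]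
  refine ContDiffAt.mul (hdet.inv (by rw [h0]; exact one_ne_zero)) hadj

lemma contDiffAt_dzbar {f : Dom n d → ℂ} {k : ℕ} (j : Fin n)
    (hf : ContDiffAt ℝ ((k + 1 : ℕ) : WithTop ℕ∞) f 0) :
    ContDiffAt ℝ (k : WithTop ℕ∞) (dzbar j f) 0 := by
  unfold dzbar
  exact contDiffAt_const.mul ((contDiffAt_fderiv_apply hf _).add
    (contDiffAt_const.mul (contDiffAt_fderiv_apply hf _)))

lemma contDiffAt_Lambda (hφ : AnalyticAt ℝ φ 0) (hdφ0 : fderiv ℝ φ 0 = 0)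
    {f : Dom n d → ℂ} {k : ℕ} (j : Fin n)
    (hf : ContDiffAt ℝ ((k + 1 : ℕ) : WithTop ℕ∞) f 0) :
    ContDiffAt ℝ (k : WithTop ℕ∞) (Lambda φ j f) 0 := by
  unfold Lambda
  refine (contDiffAt_dzbar j hf).sub (contDiffAt_const.mul (ContDiffAt.sum fun l _ => ?_))
  refine ContDiffAt.mul (ContDiffAt.sum fun i _ => ?_) (contDiffAt_fderiv_apply hf _)
  refine ContDiffAt.mul (contDiffAt_dzbar j ?_) (contDiffAt_inv_phiMat φ hφ hdφ0 k i l)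
  have h2 := (contDiffAt_pi.1 (hφ.contDiffAt (n := ((k + 1 : ℕ) : WithTop ℕ∞)))) i
  exact Complex.ofRealCLM.contDiff.contDiffAt.comp 0 h2

lemma contDiffAt_lamW (hφ : AnalyticAt ℝ φ 0) (hdφ0 : fderiv ℝ φ 0 = 0)
    {f : Dom n d → ℂ} (w : List (Fin n)) : ∀ {k : ℕ}
    (_ : ContDiffAt ℝ ((k + w.length : ℕ) : WithTop ℕ∞) f 0),
    ContDiffAt ℝ (k : WithTop ℕ∞) (lamW φ w f) 0 := by
  induction w with
  | nil => intro k hf; exact hf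
  | cons j w ih =>
    intro k hf
    rw [lamW_cons]
    refine contDiffAt_Lambda φ hφ hdφ0 j (ih ?_)
    have : k + (j :: w).length = k + 1 + w.length := by simp; ring
    rwa [this] at hf

end reg

lemma gradZ_eq {N : ℕ} (r : (Fin N → ℂ) → ℝ) (R : (Fin N → ℂ) × (Fin N → ℂ) → ℂ)
    (Z : Fin N → ℂ) (hr : DifferentiableAt ℝ r Z)
    (hR : DifferentiableAt ℂ R (Z, fun m => (starRingEnd ℂ) (Z m)))
    (he : ∀ᶠ Y in 𝓝 Z, R (Y, fun m => (starRingEnd ℂ) (Y m)) = (r Y : ℂ)) (m : Fin N) :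
    gradZ m r Z = fderiv ℂ R (Z, fun m => (starRingEnd ℂ) (Z m)) (Pi.single m 1, 0) := by
  let C : (Fin N → ℂ) →L[ℝ] (Fin N → ℂ) × (Fin N → ℂ) :=
    (ContinuousLinearMap.id ℝ _).prod
      (ContinuousLinearMap.pi fun m => (Complex.conjCLE : ℂ →L[ℝ] ℂ).comp
        (ContinuousLinearMap.proj m))
  have hC : ∀ Y, C Y = (Y, fun m => (starRingEnd ℂ) (Y m)) := fun Y => rfl
  have key : ∀ v, ((fderiv ℝ r Z v : ℝ) : ℂ) =
      fderiv ℂ R (Z, fun m => (starRingEnd ℂ) (Z m)) (C v) := by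
    intro v
    have h1 : HasFDerivAt R ((fderiv ℂ R (C Z)).restrictScalars ℝ) (C Z) :=
      (HasFDerivAt.restrictScalars ℝ (DifferentiableAt.hasFDerivAt hR))
    have h2 := h1.comp Z C.hasFDerivAt
    have h3 : HasFDerivAt (fun Y => (r Y : ℂ)) (Complex.ofRealCLM.comp (fderiv ℝ r Z)) Z :=
      Complex.ofRealCLM.hasFDerivAt.comp Z hr.hasFDerivAt
    have h4 : (R ∘ C) =ᶠ[𝓝 Z] (fun Y => (r Y : ℂ)) := he
    have h5 := h3.unique (h2.congr_of_eventuallyEq h4.symm)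
    exact congrArg (fun T => T v) h5
  unfold gradZ
  rw [key, key]
  set D := fderiv ℂ R (Z, fun m => (starRingEnd ℂ) (Z m))
  have e1 : C (Pi.single m 1) = (Pi.single m 1, 0) + (0, Pi.single m 1) := by
    rw [hC]; ext i <;> by_cases h : i = m
    · subst h; simp
    · simp [h]
    · subst h; simp
    · simp [h]
  have e2 : C (Pi.single m Complex.I) =
      Complex.I • ((Pi.single m 1, 0) - (0, Pi.single m 1) : (Fin N → ℂ) × (Fin N → ℂ)) := by
    rw [hC]; ext i <;> by_cases h : i = m
    · subst h; simp
    · simp [h]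
    · subst h; simp
    · simp [h]
  rw [e1, e2, map_smul, map_add, map_sub, smul_eq_mul, ← mul_assoc, Complex.I_mul_I]
  ring

lemma jets_induction {n d N' k₀ : ℕ} (φ : Dom n d → Fin d → ℝ)
    (hφ : AnalyticAt ℝ φ 0) (hdφ0 : fderiv ℝ φ 0 = 0)
    (r : (Fin N' → ℂ) → ℝ) (hr : AnalyticAt ℝ r 0)
    (H : Dom n d → Fin N' → ℂ) (hH : ContDiffAt ℝ (k₀ : WithTop ℕ∞) H 0) (hH0 : H 0 = 0)
    (hCR : ∀ᶠ p in 𝓝 (0 : Dom n d), ∀ j m, Lambda φ j (fun q => H q m) p = 0) :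
    ∀ w : List (Fin n), w.length ≤ k₀ →
    ∃ (κ : Type) (_ : Fintype κ) (u : κ → List (Fin n)) (μ : κ → Fin N')
      (P : (Fin N' → ℂ) × (κ → ℂ) → ℂ),
      (∀ i, (u i).Sublist w) ∧
      AnalyticAt ℂ P
        (H 0, fun i => lamW φ (u i) (fun q => (starRingEnd ℂ) (H q (μ i))) 0) ∧
      (∀ᶠ p in 𝓝 (0 : Dom n d), lamW φ w (fun p => (r (H p) : ℂ)) p =
        P (H p, fun i => lamW φ (u i) (fun q => (starRingEnd ℂ) (H q (μ i))) p)) ∧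
      ∀ m, ∀ᶠ p in 𝓝 (0 : Dom n d), lamW φ w (fun p => gradZ m r (H p)) p =
        fderiv ℂ P (H p, fun i => lamW φ (u i) (fun q => (starRingEnd ℂ) (H q (μ i))) p)
          (Pi.single m 1, 0) := by
  intro w
  induction w with
  | nil =>
    intro _
    obtain ⟨R, hR, hRe⟩ := complexify r hr
    have hHc : Tendsto H (𝓝 0) (𝓝 0) := by
      have := hH.continuousAt.tendsto; rwa [hH0] at this
    have hconj : Tendsto (fun Z : Fin N' → ℂ => (Z, fun m => (starRingEnd ℂ) (Z m)))
        (𝓝 0) (𝓝 0) := by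
      have hc : Continuous (fun Z : Fin N' → ℂ => (Z, fun m => (starRingEnd ℂ) (Z m))) := by
        refine continuous_id.prodMk (continuous_pi fun m => ?_)
        exact Complex.continuous_conj.comp (continuous_apply m)
      have h0 : ((0 : Fin N' → ℂ), fun m => (starRingEnd ℂ) ((0 : Fin N' → ℂ) m)) = 0 := by
        ext <;> simp
      have := hc.tendsto 0
      rwa [h0] at this
    refine ⟨Fin N', inferInstance, fun _ => [], id, R, fun i => List.Sublist.refl _, ?_, ?_, ?_⟩
    · have : (H 0, fun i => lamW φ [] (fun q => (starRingEnd ℂ) (H q (id i))) 0) =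
          (0 : (Fin N' → ℂ) × (Fin N' → ℂ)) := by
        ext <;> simp [lamW, hH0]
      rw [this]; exact hR
    · filter_upwards [hHc.eventually hRe] with p hp using hp.symm
    · intro m
      have h1 : ∀ᶠ Z in 𝓝 (0 : Fin N' → ℂ), gradZ m r Z =
          fderiv ℂ R (Z, fun m => (starRingEnd ℂ) (Z m)) (Pi.single m 1, 0) := by
        filter_upwards [hRe.eventually_nhds, hr.eventually_analyticAt,
          hconj.eventually hR.eventually_analyticAt] with Z h1 h2 h3
        exact gradZ_eq r R Z h2.differentiableAt h3.differentiableAt h1 m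
      filter_upwards [hHc.eventually h1] with p hp using hp
  | cons j w ih =>
    intro hlen
    have hlen' : w.length + 1 ≤ k₀ := by simpa using hlen
    obtain ⟨κ, hκ, u, μ, P, hu, hP, hPe, hPm⟩ := ih (by omega)
    -- the current jets
    set J : Dom n d → κ → ℂ :=
      fun p i => lamW φ (u i) (fun q => (starRingEnd ℂ) (H q (μ i))) p with hJ
    have hJ1 : ContDiffAt ℝ 1 J 0 := by
      refine contDiffAt_pi.2 fun i => ?_
      have h1 : ContDiffAt ℝ (k₀ : WithTop ℕ∞) (fun q => (starRingEnd ℂ) (H q (μ i))) 0 :=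
        Complex.conjCLE.contDiff.contDiffAt.comp 0 (contDiffAt_pi.1 hH (μ i))
      have h2 := (hu i).length_le
      have h3 : ContDiffAt ℝ ((1 + (u i).length : ℕ) : WithTop ℕ∞)
          (fun q => (starRingEnd ℂ) (H q (μ i))) 0 :=
        h1.of_le (by exact_mod_cast (by omega : 1 + (u i).length ≤ k₀))
      have h4 := contDiffAt_lamW φ hφ hdφ0 (u i) h3
      simpa using h4
    have hH1 : ContDiffAt ℝ 1 H 0 :=
      hH.of_le (by exact_mod_cast (by omega : 1 ≤ k₀))
    set g : Dom n d → (Fin N' → ℂ) × (κ → ℂ) := fun p => (H p, J p) with hg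
    have hg1 : ContDiffAt ℝ 1 g 0 := hH1.prodMk hJ1
    have hgd : ∀ᶠ p in 𝓝 (0 : Dom n d), DifferentiableAt ℝ g p := by
      filter_upwards [hg1.eventually (by simp)] with p hp using hp.differentiableAt one_ne_zero
    have hgP : ∀ᶠ p in 𝓝 (0 : Dom n d), AnalyticAt ℂ P (g p) :=
      hg1.continuousAt.eventually hP.eventually_analyticAt
    have hlam : ∀ᶠ p in 𝓝 (0 : Dom n d), lamV φ j g p = (0, fun i => Lambda φ j (fun q => J q i) p) := by
      filter_upwards [hgd, hCR] with p hp hcr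
      refine Prod.ext (funext fun m => ?_) (funext fun i => ?_)
      · have := lamV_comp φ j g (((ContinuousLinearMap.proj (R := ℂ) (φ := fun _ => ℂ) m).comp
          (ContinuousLinearMap.fst ℂ (Fin N' → ℂ) (κ → ℂ)))) p hp
            (ContinuousLinearMap.differentiableAt _)
        rw [ContinuousLinearMap.fderiv] at this
        exact this.symm.trans (hcr j m)
      · have := lamV_comp φ j g (((ContinuousLinearMap.proj (R := ℂ) (φ := fun _ => ℂ) i).comp
          (ContinuousLinearMap.snd ℂ (Fin N' → ℂ) (κ → ℂ)))) p hp
            (ContinuousLinearMap.differentiableAt _)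
        rw [ContinuousLinearMap.fderiv] at this
        exact this.symm
    -- linear maps on the enlarged jet space
    let A : (Fin N' → ℂ) × (κ ⊕ κ → ℂ) →L[ℂ] (Fin N' → ℂ) × (κ → ℂ) :=
      (ContinuousLinearMap.fst ℂ _ _).prod
        (ContinuousLinearMap.pi fun i => (ContinuousLinearMap.proj (Sum.inl i)).comp
          (ContinuousLinearMap.snd ℂ _ _))
    let B : (Fin N' → ℂ) × (κ ⊕ κ → ℂ) →L[ℂ] (Fin N' → ℂ) × (κ → ℂ) :=
      (0 : _ →L[ℂ] (Fin N' → ℂ)).prod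
        (ContinuousLinearMap.pi fun i => (ContinuousLinearMap.proj (Sum.inr i)).comp
          (ContinuousLinearMap.snd ℂ _ _))
    let P' : (Fin N' → ℂ) × (κ ⊕ κ → ℂ) → ℂ := fun x => fderiv ℂ P (A x) (B x)
    have hP'an : ∀ x, AnalyticAt ℂ P (A x) → AnalyticAt ℂ P' x := by
      intro x hx
      have h1 : AnalyticAt ℂ (fun x => fderiv ℂ P (A x)) x := hx.fderiv.comp (A.analyticAt x)
      exact ((h1.contDiffAt (n := ⊤)).clm_apply (B.analyticAt x).contDiffAt).analyticAt
    have hP'd : ∀ x, AnalyticAt ℂ P (A x) → ∀ m, fderiv ℂ P' x (Pi.single m 1, 0) =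
        fderiv ℂ (fderiv ℂ P) (A x) (Pi.single m 1, 0) (B x) := by
      intro x hx m
      have h1 : HasFDerivAt (fun x => fderiv ℂ P (A x))
          ((fderiv ℂ (fderiv ℂ P) (A x)).comp A) x :=
        hx.fderiv.differentiableAt.hasFDerivAt.comp x A.hasFDerivAt
      have h2 := h1.clm_apply (B.hasFDerivAt (x := x))
      rw [HasFDerivAt.fderiv h2]
      have hA : A (Pi.single m 1, 0) = (Pi.single m 1, 0) := rfl
      have hB : B (Pi.single m 1, 0) = 0 := rfl
      simp [hA, hB]
    let u' : κ ⊕ κ → List (Fin n) := Sum.elim u (fun i => j :: u i)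
    let μ' : κ ⊕ κ → Fin N' := Sum.elim μ μ
    have hAg : ∀ p, A (H p, fun i => lamW φ (u' i) (fun q => (starRingEnd ℂ) (H q (μ' i))) p)
        = g p := fun p => rfl
    have hBg : ∀ p, B (H p, fun i => lamW φ (u' i) (fun q => (starRingEnd ℂ) (H q (μ' i))) p)
        = (0, fun i => Lambda φ j (fun q => J q i) p) := fun p => rfl
    refine ⟨κ ⊕ κ, inferInstance, u', μ', P', ?_, ?_, ?_, ?_⟩
    · rintro (i | i)
      · exact (hu i).cons j
      · exact (hu i).cons_cons j
    · exact hP'an _ (by rw [hAg]; exact hP)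
    · have h1 := Lambda_congr φ j hPe
      filter_upwards [h1, hgd, hgP, hlam] with p hp1 hp2 hp3 hp4
      rw [lamW_cons, hp1]
      have h5 := lamV_comp φ j g P p hp2 hp3.differentiableAt
      rw [hp4] at h5
      simp only [P', hAg, hBg]
      exact h5
    · intro m
      have h1 := Lambda_congr φ j (hPm m)
      filter_upwards [h1, hgd, hgP, hlam] with p hp1 hp2 hp3 hp4
      rw [lamW_cons, hp1, hP'd _ (by rw [hAg]; exact hp3), hAg, hBg, ← hp4]
      have hd2 : DifferentiableAt ℂ (fderiv ℂ P) (g p) := hp3.fderiv.differentiableAt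
      have h5 := lamV_comp φ j g (fun x => fderiv ℂ P x (Pi.single m 1, 0)) p hp2
        (hd2.clm_apply (differentiableAt_const _))
      have h6 : fderiv ℂ (fun x => fderiv ℂ P x (Pi.single m 1, 0)) (g p) (lamV φ j g p) =
          fderiv ℂ (fderiv ℂ P) (g p) (lamV φ j g p) (Pi.single m 1, 0) := by
        rw [fderiv_clm_apply hd2 (differentiableAt_const _)]
        simp
      have hsym : IsSymmSndFDerivAt ℂ P (g p) :=
        (hp3.contDiffAt (n := 2)).isSymmSndFDerivAt (by simp)
      rw [hsym.eq, ← h6]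
      exact h5

lemma fderiv_single_sum {N : ℕ} {X : Type} [NormedAddCommGroup X] [NormedSpace ℂ X]
    (D : (Fin N → ℂ) × X →L[ℂ] ℂ) (v : Fin N → ℂ) :
    D (v, 0) = ∑ m, v m * D (Pi.single m 1, 0) := by
  have h : ((v, 0) : (Fin N → ℂ) × X) = ∑ m, v m • ((Pi.single m 1, 0) : (Fin N → ℂ) × X) := by
    refine Prod.ext ?_ ?_
    · rw [Prod.fst_sum]
      ext i; simp [Finset.sum_apply, Pi.single_apply]
    · rw [Prod.snd_sum]; simp
  rw [h, map_sum]
  exact Finset.sum_congr rfl fun m _ => by rw [map_smul, smul_eq_mul]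

lemma exists_enum (n k₀ : ℕ) : ∃ (K : ℕ) (e : Fin K → (Fin n → ℕ)),
      Function.Injective e ∧
      (∀ i, 1 ≤ ∑ j, e i j ∧ ∑ j, e i j ≤ k₀) ∧
      (∀ β : Fin n → ℕ, 1 ≤ ∑ j, β j → (∑ j, β j) ≤ k₀ → ∃ i, e i = β) := by
  classical
  let S : Finset (Fin n → ℕ) := (Fintype.piFinset fun _ => Finset.range (k₀ + 1)).filter
    fun β => 1 ≤ ∑ j, β j ∧ ∑ j, β j ≤ k₀
  have hS : ∀ β, β ∈ S ↔ 1 ≤ ∑ j, β j ∧ ∑ j, β j ≤ k₀ := by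
    intro β
    simp only [S, Finset.mem_filter, Fintype.mem_piFinset, Finset.mem_range, and_iff_right_iff_imp]
    intro h j
    have := Finset.single_le_sum (f := β) (fun i _ => Nat.zero_le _) (Finset.mem_univ j)
    omega
  refine ⟨S.card, fun i => (S.equivFin.symm i : Fin n → ℕ), ?_, ?_, ?_⟩
  · exact Subtype.val_injective.comp S.equivFin.symm.injective
  · intro i; exact (hS _).1 (S.equivFin.symm i).2
  · intro β h1 h2
    exact ⟨S.equivFin ⟨β, (hS β).2 ⟨h1, h2⟩⟩, by simp⟩

/-- for a `k₀`-nondegenerate CR map `H : M → M'` of class `C^{k₀}` there are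
holomorphic functions `Υ₁,…,Υ_{N'}` near `(0, (Λ^β H̄(0))_{1≤|β|≤k₀})` such that
`Hⱼ = Υⱼ(H̄, (Λ^β H̄)_{1≤|β|≤k₀})` near `0` on `M`. -/
theorem exists_Upsilon {n d N' d' k₀ : ℕ} (hn : 1 ≤ n) (hd : 1 ≤ d) (hd' : 1 ≤ d')
    -- the source manifold M, in normal form
    (φ : Dom n d → Fin d → ℝ)
    (hφan : ∀ᶠ p in 𝓝 (0 : Dom n d), AnalyticAt ℝ φ p)
    (hφ0 : φ 0 = 0) (hdφ0 : fderiv ℝ φ 0 = 0)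
    -- the target manifold M', generic through 0
    (ρ : Fin d' → (Fin N' → ℂ) → ℝ)
    (hρan : ∀ l, ∀ᶠ Z in 𝓝 (0 : Fin N' → ℂ), AnalyticAt ℝ (ρ l) Z)
    (hρ0 : ∀ l, ρ l 0 = 0)
    (hρind : LinearIndependent ℂ fun l : Fin d' => fun m => gradZ m (ρ l) 0)
    -- the CR map H : M → M' of class C^{k₀}
    (H : Dom n d → Fin N' → ℂ) (U : Set (Dom n d)) (hU : IsOpen U) (h0U : (0 : Dom n d) ∈ U)
    (hHsm : ContDiffOn ℝ k₀ H U) (hH0 : H 0 = 0)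
    (hHCR : ∀ p ∈ U, ∀ j m, Lambda φ j (fun q => H q m) p = 0)
    (hHM' : ∀ p ∈ U, ∀ l, ρ l (H p) = 0)
    -- H is k₀-nondegenerate at 0
    (hnd_top : Ek φ ρ H k₀ = ⊤) (hnd_min : ∀ k < k₀, Ek φ ρ H k ≠ ⊤) :
    ∃ (K : ℕ) (e : Fin K → (Fin n → ℕ)),
      -- e enumerates {β : 1 ≤ |β| ≤ k₀}, so K is its cardinality
      Function.Injective e ∧
      (∀ i, 1 ≤ ∑ j, e i j ∧ ∑ j, e i j ≤ k₀) ∧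
      (∀ β : Fin n → ℕ, 1 ≤ ∑ j, β j → (∑ j, β j) ≤ k₀ → ∃ i, e i = β) ∧
      ∃ (V : Set ((Fin N' → ℂ) × (Fin K → Fin N' → ℂ)))
        (Υ : (Fin N' → ℂ) × (Fin K → Fin N' → ℂ) → Fin N' → ℂ),
        IsOpen V ∧
        -- V is a neighborhood of the point (0, (Λ^β H̄(0))_{1≤|β|≤k₀}) = (H̄(0), …)
        ((fun m => (starRingEnd ℂ) (H 0 m)),
          fun i m => LambdaPow φ (e i) (fun q => (starRingEnd ℂ) (H q m)) 0) ∈ V ∧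
        DifferentiableOn ℂ Υ V ∧
        ∀ᶠ p in 𝓝 (0 : Dom n d),
          H p = Υ ((fun m => (starRingEnd ℂ) (H p m)),
            fun i m => LambdaPow φ (e i) (fun q => (starRingEnd ℂ) (H q m)) p) := by
  classical
  obtain ⟨K, e, he1, he2, he3⟩ := exists_enum n k₀
  refine ⟨K, e, he1, he2, he3, ?_⟩
  have hφ : AnalyticAt ℝ φ 0 := hφan.self_of_nhds
  have hUn : U ∈ 𝓝 (0 : Dom n d) := hU.mem_nhds h0U
  have hH : ContDiffAt ℝ (k₀ : WithTop ℕ∞) H 0 := hHsm.contDiffAt hUn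
  have hCR : ∀ᶠ p in 𝓝 (0 : Dom n d), ∀ j m, Lambda φ j (fun q => H q m) p = 0 := by
    filter_upwards [hUn] with p hp using hHCR p hp
  -- the full jets
  let X : Type := (Fin N' → ℂ) × (Fin K → Fin N' → ℂ)
  let J : Dom n d → X := fun p => ((fun m => (starRingEnd ℂ) (H p m)),
    fun i m => LambdaPow φ (e i) (fun q => (starRingEnd ℂ) (H q m)) p)
  have hconjH : ∀ m, ContDiffAt ℝ (k₀ : WithTop ℕ∞) (fun q => (starRingEnd ℂ) (H q m)) 0 :=
    fun m => Complex.conjCLE.contDiff.contDiffAt.comp 0 (contDiffAt_pi.1 hH m)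
  have hJc : ContinuousAt J 0 := by
    refine ContinuousAt.prodMk (continuousAt_pi.2 fun m => (hconjH m).continuousAt)
      (continuousAt_pi.2 fun i => continuousAt_pi.2 fun m => ?_)
    rw [LambdaPow_eq]
    refine (contDiffAt_lamW φ hφ hdφ0 (wordOf (e i)) (k := 0) ?_).continuousAt
    refine (hconjH m).of_le ?_
    have := (he2 i).2
    rw [wordOf_length]
    exact_mod_cast (by omega : 0 + ∑ j, e i j ≤ k₀)
  -- coordinates of the jet space reading off each jet
  have hcoord : ∀ (α : Fin n → ℕ), ∑ j, α j ≤ k₀ → ∀ u, List.Sublist u (wordOf α) →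
      ∀ m : Fin N', ∃ T : X →L[ℂ] ℂ,
        ∀ p, T (J p) = lamW φ u (fun q => (starRingEnd ℂ) (H q m)) p := by
    intro α hα u hu m
    obtain ⟨γ, rfl⟩ := sublist_wordOf α u hu
    have hγ : ∑ j, γ j ≤ k₀ := by
      have := hu.length_le
      rw [wordOf_length, wordOf_length] at this
      omega
    rcases Nat.eq_zero_or_pos (∑ j, γ j) with h0 | h0
    · refine ⟨(ContinuousLinearMap.proj (R := ℂ) (φ := fun _ => ℂ) m).comp
        (ContinuousLinearMap.fst ℂ _ _), fun p => ?_⟩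
      have : wordOf γ = [] := List.length_eq_zero_iff.1 (by rw [wordOf_length, h0])
      rw [this]
      rfl
    · obtain ⟨i, rfl⟩ := he3 γ h0 hγ
      refine ⟨(ContinuousLinearMap.proj (R := ℂ) (φ := fun _ => ℂ) m).comp
        ((ContinuousLinearMap.proj (R := ℂ) (φ := fun _ => Fin N' → ℂ) i).comp
        (ContinuousLinearMap.snd ℂ _ _)), fun p => ?_⟩
      rw [← LambdaPow_eq]
      rfl
  -- the equations
  have heqn : ∀ (α : Fin n → ℕ) (l : Fin d'), ∑ j, α j ≤ k₀ →
      ∃ Q : (Fin N' → ℂ) × X → ℂ, AnalyticAt ℂ Q (H 0, J 0) ∧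
        (∀ᶠ p in 𝓝 (0 : Dom n d), Q (H p, J p) = 0) ∧
        ∀ m, fderiv ℂ Q (H 0, J 0) (Pi.single m 1, 0) =
          LambdaPow φ α (fun p => gradZ m (ρ l) (H p)) 0 := by
    intro α l hα
    obtain ⟨κ, _, u, μ, P, hu, hP, hPe, hPm⟩ := jets_induction φ hφ hdφ0 (ρ l)
      (hρan l).self_of_nhds H hH hH0 hCR (wordOf α) (by rw [wordOf_length]; exact hα)
    choose T hT using fun i => hcoord α hα (u i) (hu i) (μ i)
    let A : (Fin N' → ℂ) × X →L[ℂ] (Fin N' → ℂ) × (κ → ℂ) :=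
      (ContinuousLinearMap.fst ℂ _ _).prod
        ((ContinuousLinearMap.pi T).comp (ContinuousLinearMap.snd ℂ _ _))
    have hA : ∀ p, A (H p, J p) =
        (H p, fun i => lamW φ (u i) (fun q => (starRingEnd ℂ) (H q (μ i))) p) :=
      fun p => Prod.ext rfl (funext fun i => hT i p)
    rw [← hA] at hP
    refine ⟨fun x => P (A x), hP.comp (A.analyticAt _), ?_, ?_⟩
    · have h0 : (fun p => ((ρ l (H p) : ℝ) : ℂ)) =ᶠ[𝓝 0] fun _ => 0 := by
        filter_upwards [hUn] with p hp
        rw [hHM' p hp l]; simp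
      filter_upwards [lamW_zero_ev φ _ h0 (wordOf α), hPe] with p h1 h2
      rw [hA, ← h2, h1]
    · intro m
      have h1 := hP.differentiableAt.hasFDerivAt.comp (H 0, J 0) A.hasFDerivAt
      have h2 : fderiv ℂ (fun x => P (A x)) (H 0, J 0) = _ := h1.fderiv
      rw [h2, LambdaPow_eq, (hPm m).self_of_nhds, hA]
      have hA1 : A (Pi.single m 1, 0) = (Pi.single m 1, 0) :=
        Prod.ext rfl (funext fun i => map_zero (T i))
      rw [ContinuousLinearMap.comp_apply, hA1]
  -- choose `N'` of them
  set S : Set (Fin N' → ℂ) := { v | ∃ (α : Fin n → ℕ) (l : Fin d'), (∑ j, α j) ≤ k₀ ∧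
    v = fun m => LambdaPow φ α (fun p => gradZ m (ρ l) (H p)) 0 } with hS
  have hspan : Submodule.span ℂ S = ⊤ := hnd_top
  obtain ⟨f, hf1, hf2, -⟩ := Submodule.exists_fun_fin_finrank_span_eq ℂ S
  have hfr : Module.finrank ℂ (Submodule.span ℂ S) = N' := by
    rw [hspan, finrank_top]; simp
  replace hf2 := hf2.trans hspan
  let g : Fin N' → (Fin N' → ℂ) := fun i => f (Fin.cast hfr.symm i)
  have hg1 : ∀ i, g i ∈ S := fun i => hf1 _
  have hg2 : Submodule.span ℂ (Set.range g) = ⊤ := by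
    rw [← hf2]; congr 1
    exact (finCongr hfr.symm).surjective.range_comp f
  choose α l hα hgv using hg1
  choose Q hQ1 hQ2 hQ3 using fun i => heqn (α i) (l i) (hα i)
  let F : (Fin N' → ℂ) × X → (Fin N' → ℂ) := fun x i => Q i x
  have hF : AnalyticAt ℂ F (H 0, J 0) := AnalyticAt.pi hQ1
  have hF0 : ∀ᶠ p in 𝓝 (0 : Dom n d), F (H p, J p) = 0 := by
    filter_upwards [eventually_all.2 hQ2] with p hp
    exact funext hp
  have hinj : ∀ v, fderiv ℂ F (H 0, J 0) (v, 0) = 0 → v = 0 := by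
    intro v hv
    have h1 : ∀ i, ∑ m, v m * g i m = 0 := by
      intro i
      have h2 : fderiv ℂ (Q i) (H 0, J 0) (v, 0) = 0 := by
        have h3 := hasFDerivAt_pi'.1 hF.differentiableAt.hasFDerivAt i
        have h4 : fderiv ℂ (Q i) (H 0, J 0) = _ := h3.fderiv
        rw [h4, ContinuousLinearMap.comp_apply, hv]; rfl
      rw [fderiv_single_sum] at h2
      rw [← h2]
      refine Finset.sum_congr rfl fun m _ => ?_
      rw [hQ3, hgv i]
    let ℓ : (Fin N' → ℂ) →ₗ[ℂ] ℂ := Fintype.linearCombination ℂ v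
    have hl : ∀ w, ℓ w = ∑ m, v m * w m := fun w => by
      simp [ℓ, Fintype.linearCombination_apply, mul_comm]
    have h5 : ℓ = 0 := by
      refine LinearMap.ext_on_range hg2 fun i => ?_
      rw [hl, h1 i]; rfl
    funext m
    have h6 := hl (Pi.single m 1)
    rw [h5] at h6
    simpa [Pi.single_apply] using h6.symm
  obtain ⟨V, Υ, hVo, hV0, hΥ, hev⟩ :=
    implicit_holo F (H 0) (J 0) hF hF0.self_of_nhds hinj
  refine ⟨V, Υ, hVo, hV0, hΥ, ?_⟩
  have htend : Tendsto (fun p => (H p, J p)) (𝓝 0) (𝓝 (H 0, J 0)) :=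
    (hH.continuousAt.prodMk hJc).tendsto
  filter_upwards [htend.eventually hev, hF0] with p h1 h2
  exact h1 h2
end
end
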